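/- arXiv:1808.05191 — 7 statements merged into one kernel-verified Lean document; each statement's English description precedes it below -/
import Mathlib

section
/- Let d ≥ 1, let q, ε be real constants, P ∈ L¹(ℝ^d) and g, h ∈ L¹(ℝ^{2d}). Then, with m_g(X) = ∫_{ℝ^d} g(X,k) dk and m_h(X) = ∫_{ℝ^d} h(X,k) dk, one has ‖B[m_g, g] − B[m_h, h]‖_{L¹(ℝ^{2d})} ≤ 2|q| ( ‖P‖_{L¹(ℝ^d)} + |ε| ‖g‖_{L¹(ℝ^{2d})} + |ε| ‖h‖_{L¹(ℝ^{2d})} ) ‖g − h‖_{L¹(ℝ^{2d})}. -/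
open MeasureTheory Real Filter

noncomputable section

/-- The bilinear operator `B[m,f]` of the Alber–Fourier equation. -/
def Bop (d : ℕ) (q ε : ℝ) (P : (Fin d → ℝ) → ℂ) (m : (Fin d → ℝ) → ℂ)
    (f : ((Fin d → ℝ) × (Fin d → ℝ)) → ℂ) : ((Fin d → ℝ) × (Fin d → ℝ)) → ℂ :=
  fun z => Complex.I * q * (P (z.2 - (2⁻¹ : ℝ) • z.1) - P (z.2 + (2⁻¹ : ℝ) • z.1)) * m z.1
    + (ε : ℂ) * Complex.I * q *
        ∫ s : Fin d → ℝ,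
          m s * (f (z.1 - s, z.2 - (2⁻¹ : ℝ) • s) - f (z.1 - s, z.2 + (2⁻¹ : ℝ) • s))

/-!
Let `D m f (s, x) = m s • (f (x + v s) - f (x + w s))`. A shear `(s, x) ↦ (s, x + w s)` preserves
the product measure, so `‖D m f‖ ≤ 2 ‖m‖ ‖f‖` in `L¹`; since `D` is bilinear,
`‖D m f - D n g‖ ≤ 2 (‖m - n‖ ‖f‖ + ‖n‖ ‖f - g‖)`. The potential term of `B` is such a function, and
the quadratic term is the marginal of one. Taking marginals contracts `L¹`, which settles the
quadratic term and also gives `‖m_g - m_h‖ ≤ ‖g - h‖` and `‖m_h‖ ≤ ‖h‖`.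
-/

section Marginal

variable {X Y V : Type*} [MeasurableSpace X] [MeasurableSpace Y]
  [NormedAddCommGroup V] [NormedSpace ℝ V] {μ : Measure X} {ν : Measure Y} [SFinite μ] [SFinite ν]

theorem integral_norm_integral_prod_le {f : X × Y → V} (hf : Integrable f (μ.prod ν)) :
    ∫ x, ‖∫ y, f (x, y) ∂ν‖ ∂μ ≤ ∫ z, ‖f z‖ ∂μ.prod ν := by
  rw [integral_prod _ hf.norm]
  exact integral_mono hf.integral_prod_left.norm hf.norm.integral_prod_left
    fun _ => norm_integral_le_integral_norm _

theorem integral_norm_integral_prod_sub_le {f g : X × Y → V} (hf : Integrable f (μ.prod ν))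
    (hg : Integrable g (μ.prod ν)) :
    ∫ x, ‖(∫ y, f (x, y) ∂ν) - ∫ y, g (x, y) ∂ν‖ ∂μ ≤ ∫ z, ‖f z - g z‖ ∂μ.prod ν :=
  (integral_fn_integral_sub norm hf hg).symm.trans_le (integral_norm_integral_prod_le (hf.sub hg))

theorem integral_norm_integral_prod_sub_le_symm {f g : X × Y → V}
    (hf : Integrable f (μ.prod ν)) (hg : Integrable g (μ.prod ν)) :
    ∫ y, ‖(∫ x, f (x, y) ∂μ) - ∫ x, g (x, y) ∂μ‖ ∂ν ≤ ∫ z, ‖f z - g z‖ ∂μ.prod ν :=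
  (integral_norm_integral_prod_sub_le hf.swap hg.swap).trans_eq
    (integral_prod_swap fun z => ‖f z - g z‖)

end Marginal

instance measurableAdd₂_prod {A B : Type*} [MeasurableSpace A] [MeasurableSpace B] [Add A] [Add B]
    [MeasurableAdd₂ A] [MeasurableAdd₂ B] : MeasurableAdd₂ (A × B) where
  measurable_add := by
    simp only [Prod.add_def]
    fun_prop

section TranslateDiff

variable {S G R V : Type*} [Add G] [Ring R] [AddCommGroup V] [Module R V]

/-- The difference of two translates of `f`, by shifts `v s` and `w s` depending on a parameter `s`
with weight `m s`, as a function of the pair `(s, x)`. Both terms of the operator `B` come from it: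
the potential term directly, the quadratic term after integration over `s`. -/
def translateDiff (v w : S → G) (m : S → R) (f : G → V) (p : S × G) : V :=
  m p.1 • (f (p.2 + v p.1) - f (p.2 + w p.1))

theorem translateDiff_sub_translateDiff (v w : S → G) (m n : S → R) (f g : G → V) (p : S × G) :
    translateDiff v w m f p - translateDiff v w n g p =
      translateDiff v w (m - n) f p + translateDiff v w n (f - g) p := by
  simp only [translateDiff, Pi.sub_apply, smul_sub, sub_smul]
  abel

end TranslateDiff

section TranslateDiffIntegral

variable {S G R V : Type*} [MeasurableSpace S] [MeasurableSpace G] [Add G] [MeasurableAdd₂ G]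
  {μ : Measure S} {ν : Measure G} [SFinite μ] [SFinite ν] [ν.IsAddRightInvariant] {v w : S → G}

theorem measurePreserving_prod_add_comp (hw : Measurable w) :
    MeasurePreserving (fun p : S × G => (p.1, p.2 + w p.1)) (μ.prod ν) (μ.prod ν) :=
  (MeasurePreserving.id μ).skew_product (g := fun s x => x + w s) (by fun_prop)
    (ae_of_all _ fun s => map_add_right_eq_self ν (w s))

variable [NormedRing R] [NormedAddCommGroup V] [Module R V] [IsBoundedSMul R V]
  {m n : S → R} {f g : G → V}

theorem integrable_smul_translate (hw : Measurable w) (hm : Integrable m μ)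
    (hf : Integrable f ν) :
    Integrable (fun p : S × G => m p.1 • f (p.2 + w p.1)) (μ.prod ν) :=
  (measurePreserving_prod_add_comp hw).integrable_comp_of_integrable (hm.smul_prod hf)

theorem integral_norm_smul_translate_le (hw : Measurable w) (hm : Integrable m μ)
    (hf : Integrable f ν) :
    ∫ p : S × G, ‖m p.1 • f (p.2 + w p.1)‖ ∂μ.prod ν ≤ (∫ s, ‖m s‖ ∂μ) * ∫ x, ‖f x‖ ∂ν := by
  have hshear := measurePreserving_prod_add_comp (μ := μ) (ν := ν) hw
  have hmf : Integrable (fun p : S × G => m p.1 • f p.2) (μ.prod ν) := hm.smul_prod hf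
  calc ∫ p : S × G, ‖m p.1 • f (p.2 + w p.1)‖ ∂μ.prod ν
      = ∫ p : S × G, ‖m p.1 • f p.2‖ ∂μ.prod ν := by
        have hmeas := hmf.norm.aestronglyMeasurable
        rw [← hshear.map_eq] at hmeas
        rw [← integral_map hshear.aemeasurable hmeas, hshear.map_eq]
    _ ≤ ∫ p : S × G, ‖m p.1‖ * ‖f p.2‖ ∂μ.prod ν :=
        integral_mono hmf.norm (hm.norm.mul_prod hf.norm) fun _ => norm_smul_le _ _
    _ = (∫ s, ‖m s‖ ∂μ) * ∫ x, ‖f x‖ ∂ν :=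
        integral_prod_mul (fun s => ‖m s‖) fun x => ‖f x‖

theorem integrable_translateDiff (hv : Measurable v) (hw : Measurable w) (hm : Integrable m μ)
    (hf : Integrable f ν) : Integrable (translateDiff v w m f) (μ.prod ν) :=
  ((integrable_smul_translate hv hm hf).sub (integrable_smul_translate hw hm hf)).congr
    (ae_of_all _ fun _ => (smul_sub _ _ _).symm)

theorem integral_norm_translateDiff_le (hv : Measurable v) (hw : Measurable w)
    (hm : Integrable m μ) (hf : Integrable f ν) :
    ∫ p, ‖translateDiff v w m f p‖ ∂μ.prod ν ≤ 2 * ((∫ s, ‖m s‖ ∂μ) * ∫ x, ‖f x‖ ∂ν) := by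
  have hfv := (integrable_smul_translate hv hm hf).norm
  have hfw := (integrable_smul_translate hw hm hf).norm
  calc ∫ p, ‖translateDiff v w m f p‖ ∂μ.prod ν
      ≤ ∫ p : S × G, (‖m p.1 • f (p.2 + v p.1)‖ + ‖m p.1 • f (p.2 + w p.1)‖) ∂μ.prod ν := by
        refine integral_mono (integrable_translateDiff hv hw hm hf).norm (hfv.add hfw) fun p => ?_
        simpa only [translateDiff, smul_sub] using norm_sub_le _ _
    _ ≤ (∫ s, ‖m s‖ ∂μ) * (∫ x, ‖f x‖ ∂ν) + (∫ s, ‖m s‖ ∂μ) * ∫ x, ‖f x‖ ∂ν := by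
        rw [integral_add hfv hfw]
        exact add_le_add (integral_norm_smul_translate_le hv hm hf)
          (integral_norm_smul_translate_le hw hm hf)
    _ = 2 * ((∫ s, ‖m s‖ ∂μ) * ∫ x, ‖f x‖ ∂ν) := (two_mul _).symm

theorem integral_norm_translateDiff_sub_le (hv : Measurable v) (hw : Measurable w)
    (hm : Integrable m μ) (hn : Integrable n μ) (hf : Integrable f ν) (hg : Integrable g ν) :
    ∫ p, ‖translateDiff v w m f p - translateDiff v w n g p‖ ∂μ.prod ν ≤
      2 * ((∫ s, ‖m s - n s‖ ∂μ) * (∫ x, ‖f x‖ ∂ν) + (∫ s, ‖n s‖ ∂μ) * ∫ x, ‖f x - g x‖ ∂ν) := by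
  have hleft := integrable_translateDiff hv hw (hm.sub hn) hf
  have hright := integrable_translateDiff hv hw hn (hf.sub hg)
  simp only [translateDiff_sub_translateDiff]
  calc ∫ p, ‖translateDiff v w (m - n) f p + translateDiff v w n (f - g) p‖ ∂μ.prod ν
      ≤ ∫ p, (‖translateDiff v w (m - n) f p‖ + ‖translateDiff v w n (f - g) p‖) ∂μ.prod ν :=
        integral_mono (hleft.add hright).norm (hleft.norm.add hright.norm)
          fun _ => norm_add_le _ _
    _ ≤ 2 * ((∫ s, ‖m s - n s‖ ∂μ) * ∫ x, ‖f x‖ ∂ν) +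
          2 * ((∫ s, ‖n s‖ ∂μ) * ∫ x, ‖f x - g x‖ ∂ν) := by
        rw [integral_add hleft.norm hright.norm]
        exact add_le_add (integral_norm_translateDiff_le hv hw (hm.sub hn) hf)
          (integral_norm_translateDiff_le hv hw hn (hf.sub hg))
    _ = _ := (mul_add _ _ _).symm

end TranslateDiffIntegral

section AlberOperator

variable {E : Type*} [AddCommGroup E] [Module ℝ E]

/-- The part of `B[m,f]` linear in `P`, stripped of its factor `i q`. -/
def potentialTerm (P m : E → ℂ) (z : E × E) : ℂ :=
  (P (z.2 - (2⁻¹ : ℝ) • z.1) - P (z.2 + (2⁻¹ : ℝ) • z.1)) * m z.1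

theorem potentialTerm_eq_translateDiff (P m : E → ℂ) :
    potentialTerm P m =
      translateDiff (fun X => -((2⁻¹ : ℝ) • X)) (fun X => (2⁻¹ : ℝ) • X) m P := by
  ext z
  simp only [potentialTerm, translateDiff, smul_eq_mul, ← sub_eq_add_neg, mul_comm]

variable [MeasurableSpace E]

/-- The integral part of `B[m,f]`, stripped of its factor `ε i q`, over a measured real vector space
`(E, μ)` in place of `ℝ^d`. -/
def interactionTerm (μ : Measure E) (m : E → ℂ) (f : E × E → ℂ) (z : E × E) : ℂ :=
  ∫ s, m s * (f (z.1 - s, z.2 - (2⁻¹ : ℝ) • s) - f (z.1 - s, z.2 + (2⁻¹ : ℝ) • s)) ∂μ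

theorem interactionTerm_eq_integral_translateDiff (μ : Measure E) (m : E → ℂ) (f : E × E → ℂ) :
    interactionTerm μ m f = fun z =>
      ∫ s, translateDiff (fun s => (-s, -((2⁻¹ : ℝ) • s))) (fun s => (-s, (2⁻¹ : ℝ) • s))
        m f (s, z) ∂μ := by
  simp only [funext_iff, interactionTerm, translateDiff, smul_eq_mul, Prod.add_def,
    ← sub_eq_add_neg, implies_true]

/-- The operator `B[m,f]` over a measured real vector space `(E, μ)` in place of `ℝ^d`. -/
def alberOperator (μ : Measure E) (q ε : ℝ) (P m : E → ℂ) (f : E × E → ℂ) (z : E × E) : ℂ :=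
  Complex.I * q * potentialTerm P m z + ε * Complex.I * q * interactionTerm μ m f z

theorem Bop_eq_alberOperator (d : ℕ) (q ε : ℝ) (P m : (Fin d → ℝ) → ℂ)
    (f : (Fin d → ℝ) × (Fin d → ℝ) → ℂ) :
    Bop d q ε P m f = alberOperator volume q ε P m f := by
  ext z
  simp only [Bop, alberOperator, potentialTerm, interactionTerm, mul_assoc]

theorem norm_alberOperator_sub_le (μ : Measure E) (q ε : ℝ) (P m n : E → ℂ) (f g : E × E → ℂ)
    (z : E × E) :
    ‖alberOperator μ q ε P m f z - alberOperator μ q ε P n g z‖ ≤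
      |q| * ‖potentialTerm P m z - potentialTerm P n z‖
        + |ε| * |q| * ‖interactionTerm μ m f z - interactionTerm μ n g z‖ := by
  calc ‖alberOperator μ q ε P m f z - alberOperator μ q ε P n g z‖
      = ‖Complex.I * q * (potentialTerm P m z - potentialTerm P n z)
          + ε * Complex.I * q * (interactionTerm μ m f z - interactionTerm μ n g z)‖ := by
        simp only [alberOperator]
        congr 1
        ring
    _ ≤ _ := (norm_add_le _ _).trans_eq (by simp)

variable [MeasurableAdd₂ E] [MeasurableNeg E] [MeasurableConstSMul ℝ E]
  {μ : Measure E} [SFinite μ] [μ.IsAddRightInvariant] {P m n : E → ℂ} {f g : E × E → ℂ}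

theorem integrable_potentialTerm (hP : Integrable P μ) (hm : Integrable m μ) :
    Integrable (potentialTerm P m) (μ.prod μ) := by
  rw [potentialTerm_eq_translateDiff]
  exact integrable_translateDiff (by fun_prop) (by fun_prop) hm hP

theorem integral_norm_potentialTerm_sub_le (hP : Integrable P μ) (hm : Integrable m μ)
    (hn : Integrable n μ) :
    ∫ z, ‖potentialTerm P m z - potentialTerm P n z‖ ∂μ.prod μ ≤
      2 * ((∫ X, ‖m X - n X‖ ∂μ) * ∫ k, ‖P k‖ ∂μ) := by
  simp only [potentialTerm_eq_translateDiff]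
  simpa using integral_norm_translateDiff_sub_le (v := fun X : E => -((2⁻¹ : ℝ) • X))
    (w := fun X => (2⁻¹ : ℝ) • X) (by fun_prop) (by fun_prop) hm hn hP hP

theorem integrable_interactionTerm (hm : Integrable m μ) (hf : Integrable f (μ.prod μ)) :
    Integrable (interactionTerm μ m f) (μ.prod μ) := by
  rw [interactionTerm_eq_integral_translateDiff]
  exact (integrable_translateDiff (by fun_prop) (by fun_prop) hm hf).integral_prod_right

theorem integral_norm_interactionTerm_sub_le (hm : Integrable m μ) (hn : Integrable n μ)
    (hf : Integrable f (μ.prod μ)) (hg : Integrable g (μ.prod μ)) :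
    ∫ z, ‖interactionTerm μ m f z - interactionTerm μ n g z‖ ∂μ.prod μ ≤
      2 * ((∫ X, ‖m X - n X‖ ∂μ) * (∫ z, ‖f z‖ ∂μ.prod μ)
        + (∫ X, ‖n X‖ ∂μ) * ∫ z, ‖f z - g z‖ ∂μ.prod μ) := by
  have hv : Measurable fun s : E => (-s, -((2⁻¹ : ℝ) • s)) := by fun_prop
  have hw : Measurable fun s : E => (-s, (2⁻¹ : ℝ) • s) := by fun_prop
  simp only [interactionTerm_eq_integral_translateDiff]
  exact (integral_norm_integral_prod_sub_le_symm (integrable_translateDiff hv hw hm hf)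
    (integrable_translateDiff hv hw hn hg)).trans
      (integral_norm_translateDiff_sub_le hv hw hm hn hf hg)

theorem integrable_alberOperator (q ε : ℝ) (hP : Integrable P μ) (hm : Integrable m μ)
    (hf : Integrable f (μ.prod μ)) : Integrable (alberOperator μ q ε P m f) (μ.prod μ) :=
  ((integrable_potentialTerm hP hm).const_mul _).add
    ((integrable_interactionTerm hm hf).const_mul _)

theorem integral_norm_alberOperator_sub_le (q ε : ℝ) (hP : Integrable P μ) (hm : Integrable m μ)
    (hn : Integrable n μ) (hf : Integrable f (μ.prod μ)) (hg : Integrable g (μ.prod μ)) :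
    ∫ z, ‖alberOperator μ q ε P m f z - alberOperator μ q ε P n g z‖ ∂μ.prod μ ≤
      2 * |q| * ((∫ X, ‖m X - n X‖ ∂μ) * ((∫ k, ‖P k‖ ∂μ) + |ε| * ∫ z, ‖f z‖ ∂μ.prod μ)
        + |ε| * ((∫ X, ‖n X‖ ∂μ) * ∫ z, ‖f z - g z‖ ∂μ.prod μ)) := by
  have hpot := (((integrable_potentialTerm hP hm).sub
    (integrable_potentialTerm hP hn)).norm).const_mul |q|
  have hint := (((integrable_interactionTerm hm hf).sub
    (integrable_interactionTerm hn hg)).norm).const_mul (|ε| * |q|)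
  calc ∫ z, ‖alberOperator μ q ε P m f z - alberOperator μ q ε P n g z‖ ∂μ.prod μ
      ≤ ∫ z, (|q| * ‖potentialTerm P m z - potentialTerm P n z‖
          + |ε| * |q| * ‖interactionTerm μ m f z - interactionTerm μ n g z‖) ∂μ.prod μ :=
        integral_mono ((integrable_alberOperator q ε hP hm hf).sub
          (integrable_alberOperator q ε hP hn hg)).norm (hpot.add hint)
          (norm_alberOperator_sub_le μ q ε P m n f g)
    _ = |q| * (∫ z, ‖potentialTerm P m z - potentialTerm P n z‖ ∂μ.prod μ)
          + |ε| * |q| * ∫ z, ‖interactionTerm μ m f z - interactionTerm μ n g z‖ ∂μ.prod μ := by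
        rw [← integral_const_mul, ← integral_const_mul]
        exact integral_add hpot hint
    _ ≤ |q| * (2 * ((∫ X, ‖m X - n X‖ ∂μ) * ∫ k, ‖P k‖ ∂μ))
          + |ε| * |q| * (2 * ((∫ X, ‖m X - n X‖ ∂μ) * (∫ z, ‖f z‖ ∂μ.prod μ)
            + (∫ X, ‖n X‖ ∂μ) * ∫ z, ‖f z - g z‖ ∂μ.prod μ)) := by
        gcongr
        · exact integral_norm_potentialTerm_sub_le hP hm hn
        · exact integral_norm_interactionTerm_sub_le hm hn hf hg
    _ = _ := by ring

theorem stmt_3_general (q ε : ℝ) {g h : E × E → ℂ} (hP : Integrable P μ)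
    (hg : Integrable g (μ.prod μ)) (hh : Integrable h (μ.prod μ)) :
    ∫ z, ‖alberOperator μ q ε P (fun X => ∫ k, g (X, k) ∂μ) g z
        - alberOperator μ q ε P (fun X => ∫ k, h (X, k) ∂μ) h z‖ ∂μ.prod μ ≤
      2 * |q| * ((∫ x, ‖P x‖ ∂μ) + |ε| * (∫ z, ‖g z‖ ∂μ.prod μ) + |ε| * ∫ z, ‖h z‖ ∂μ.prod μ) *
        ∫ z, ‖g z - h z‖ ∂μ.prod μ := by
  refine (integral_norm_alberOperator_sub_le q ε hP hg.integral_prod_left hh.integral_prod_left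
    hg hh).trans ?_
  calc _ ≤ 2 * |q| * ((∫ z, ‖g z - h z‖ ∂μ.prod μ)
            * ((∫ x, ‖P x‖ ∂μ) + |ε| * ∫ z, ‖g z‖ ∂μ.prod μ)
          + |ε| * ((∫ z, ‖h z‖ ∂μ.prod μ) * ∫ z, ‖g z - h z‖ ∂μ.prod μ)) := by
        gcongr
        · exact integral_norm_integral_prod_sub_le hg hh
        · exact integral_norm_integral_prod_le hh
    _ = _ := by ring

end AlberOperator

/-- Lipschitz estimate
`‖B[m_g,g] − B[m_h,h]‖_{L¹} ≤ 2|q| (‖P‖_{L¹} + |ε|‖g‖_{L¹} + |ε|‖h‖_{L¹}) ‖g−h‖_{L¹}`. -/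
theorem stmt_3 (d : ℕ) (hd : 1 ≤ d) (q ε : ℝ) (P : (Fin d → ℝ) → ℂ) (hP : Integrable P)
    (g h : ((Fin d → ℝ) × (Fin d → ℝ)) → ℂ) (hg : Integrable g) (hh : Integrable h) :
    (∫ z, ‖Bop d q ε P (fun X => ∫ k, g (X, k)) g z
            - Bop d q ε P (fun X => ∫ k, h (X, k)) h z‖) ≤
      2 * |q| * ((∫ x, ‖P x‖) + |ε| * (∫ z, ‖g z‖) + |ε| * (∫ z, ‖h z‖)) *
        (∫ z, ‖g z - h z‖) := by
  simp only [Bop_eq_alberOperator]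
  exact stmt_3_general q ε hP hg hh

end
end

section
/- Let p ≠ 0 be real, D > 0, and let g : ℝ² → ℂ be measurable with |g(X,K)| ≤ D/(1 + X² + K²) for all X, K ∈ ℝ. Then there exists a constant C = C(p) > 0 such that for every X ∈ ℝ: sup over ω ∈ ℂ with Re ω > 0 of | X ∫_0^∞ e^{−ω t} g(X, 2πp t X) dt | ≤ C·D. -/
open MeasureTheory Real Filter

noncomputable section

/-!
For `Re ω ≥ 0` the kernel `e^{-ωt}` has modulus at most `1` on the half-line, and the factor `X` is
the Jacobian of the substitution `K = 2πptX`. Hence `X ∫_0^∞ e^{-ωt} g(X, 2πptX) dt` is bounded by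
`‖g(X, ·)‖_{L¹} / |2πp|`, and the decay of `g` bounds these `L¹` norms by `π D`.
-/

variable {E : Type*} [NormedAddCommGroup E]

section Decay

variable {f : ℝ → E} {D : ℝ}

theorem integrable_of_norm_le_div_one_add_sq (hf : AEStronglyMeasurable f)
    (hbound : ∀ K, ‖f K‖ ≤ D / (1 + K ^ 2)) : Integrable f := by
  refine (integrable_inv_one_add_sq.const_mul D).mono' hf (.of_forall fun K => ?_)
  simpa only [div_eq_mul_inv] using hbound K

theorem integral_norm_le_of_norm_le_div_one_add_sq (hbound : ∀ K, ‖f K‖ ≤ D / (1 + K ^ 2)) :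
    ∫ K, ‖f K‖ ≤ D * π := by
  calc ∫ K, ‖f K‖ ≤ ∫ K : ℝ, D * (1 + K ^ 2)⁻¹ :=
        integral_mono_of_nonneg (.of_forall fun K => norm_nonneg (f K))
          (integrable_inv_one_add_sq.const_mul D)
          (.of_forall fun K => by simpa only [div_eq_mul_inv] using hbound K)
    _ = D * π := by rw [integral_const_mul, integral_univ_inv_one_add_sq]

end Decay

section Laplace

variable [NormedSpace ℂ E] {f : ℝ → E} {ω : ℂ}

theorem norm_cexp_neg_mul_ofReal_le_one (hω : 0 ≤ ω.re) {t : ℝ} (ht : 0 ≤ t) :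
    ‖Complex.exp (-ω * t)‖ ≤ 1 := by
  rw [Complex.norm_exp, Real.exp_le_one_iff, Complex.re_mul_ofReal, Complex.neg_re]
  exact mul_nonpos_of_nonpos_of_nonneg (neg_nonpos.mpr hω) ht

theorem norm_integral_Ioi_cexp_neg_mul_smul_le (hω : 0 ≤ ω.re)
    (hf : IntegrableOn f (Set.Ioi 0)) :
    ‖∫ t in Set.Ioi (0 : ℝ), Complex.exp (-ω * t) • f t‖ ≤ ∫ t in Set.Ioi (0 : ℝ), ‖f t‖ := by
  refine norm_integral_le_of_norm_le hf.norm ?_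
  filter_upwards [ae_restrict_mem measurableSet_Ioi] with t (ht : 0 < t)
  rw [norm_smul]
  exact mul_le_of_le_one_left (norm_nonneg _) (norm_cexp_neg_mul_ofReal_le_one hω ht.le)

theorem stmt_7_general (hf : Integrable f) {b : ℝ} (hb : b ≠ 0) (X : ℝ) (hω : 0 ≤ ω.re) :
    ‖(X : ℂ) • ∫ t in Set.Ioi (0 : ℝ), Complex.exp (-ω * t) • f (b * t * X)‖ ≤
      |b|⁻¹ * ∫ K, ‖f K‖ := by
  rcases eq_or_ne X 0 with rfl | hX
  · rw [Complex.ofReal_zero, zero_smul, norm_zero]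
    positivity
  have hscaled : Integrable fun t => f (b * X * t) := hf.comp_mul_left' (mul_ne_zero hb hX)
  simp only [mul_right_comm b _ X]
  calc ‖(X : ℂ) • ∫ t in Set.Ioi (0 : ℝ), Complex.exp (-ω * t) • f (b * X * t)‖
      = |X| * ‖∫ t in Set.Ioi (0 : ℝ), Complex.exp (-ω * t) • f (b * X * t)‖ := by
        rw [norm_smul, Complex.norm_real, norm_eq_abs]
    _ ≤ |X| * ∫ t in Set.Ioi (0 : ℝ), ‖f (b * X * t)‖ := by
        gcongr
        exact norm_integral_Ioi_cexp_neg_mul_smul_le hω hscaled.integrableOn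
    _ ≤ |X| * ∫ t, ‖f (b * X * t)‖ := by
        gcongr |X| * ?_
        exact setIntegral_le_integral hscaled.norm (.of_forall fun t => norm_nonneg _)
    _ = |b|⁻¹ * ∫ K, ‖f K‖ := by
        rw [Measure.integral_comp_mul_left (fun K => ‖f K‖) (b * X), smul_eq_mul, abs_inv, abs_mul]
        field_simp

end Laplace

/-- Uniform bound for `X ñ_f(X,ω)`: if `|g(X,K)| ≤ D/(1+X²+K²)` then the
Laplace transform in `t` of `t ↦ g(X, 2πp t X)` satisfies
`sup_{Re ω > 0} |X ∫_0^∞ e^{−ωt} g(X, 2πp t X) dt| ≤ C·D` with `C = C(p)`. -/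
theorem stmt_7 (p : ℝ) (hp : p ≠ 0) :
    ∃ C > 0, ∀ D : ℝ, 0 < D → ∀ g : ℝ → ℝ → ℂ, Measurable (Function.uncurry g) →
      (∀ X K : ℝ, ‖g X K‖ ≤ D / (1 + X ^ 2 + K ^ 2)) →
      ∀ X : ℝ, ∀ ω : ℂ, 0 < ω.re →
        ‖(X : ℂ) * ∫ t in Set.Ioi (0 : ℝ), Complex.exp (-ω * t) * g X (2 * π * p * t * X)‖ ≤
          C * D := by
  refine ⟨|2 * π * p|⁻¹ * π, by positivity, fun D hD g hmeas hg X ω hω => ?_⟩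
  have hslice : AEStronglyMeasurable (g X) := hmeas.of_uncurry_left.aestronglyMeasurable
  have hbound (K : ℝ) : ‖g X K‖ ≤ D / (1 + K ^ 2) :=
    (hg X K).trans (by gcongr; exact le_add_of_nonneg_right (sq_nonneg X))
  calc _ ≤ |2 * π * p|⁻¹ * ∫ K, ‖g X K‖ :=
        stmt_7_general (integrable_of_norm_le_div_one_add_sq hslice hbound) (by positivity) X hω.le
    _ ≤ |2 * π * p|⁻¹ * (D * π) := by
        gcongr
        exact integral_norm_le_of_norm_le_div_one_add_sq hbound
    _ = |2 * π * p|⁻¹ * π * D := by ring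

end
end

section
/- Let θ and γ be real numbers with 0 < θ < 1/2, γ > 1 and 3θ + γ > 2. Then there exists a constant C = C(θ,γ) > 0 such that for every t > 0: ∫_0^∞ ∫_0^t ( 1 + x^{2θ} τ² + x^{2γ} )^{-1} dτ dx ≤ C. -/
open MeasureTheory Real Filter

/-!
Extending the `τ`-integral to `(0, ∞)` only increases it, and
`∫_0^∞ (a + b τ²)⁻¹ dτ = π / (2 √(a b))`. With `a = 1 + x^{2γ}` and `b = x^{2θ}`, the product `a b`
dominates both `x^{2θ}` and `x^{2(θ + γ)}`, so the `τ`-integral is at most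
`π / 2 * min (x^{-θ}) (x^{-(θ + γ)})`. This is independent of `t`, and it is integrable on `(0, ∞)`
as soon as `θ < 1 < θ + γ`.
-/

section InvAddMulSq

variable {a b : ℝ}

theorem inv_add_mul_sq_eq (ha : 0 < a) (hb : 0 < b) (τ : ℝ) :
    (a + b * τ ^ 2)⁻¹ = a⁻¹ * (1 + (√(b / a) * τ) ^ 2)⁻¹ := by
  rw [mul_pow, sq_sqrt (by positivity), ← mul_inv]
  congr 1
  field_simp

theorem integrable_inv_add_mul_sq (ha : 0 < a) (hb : 0 < b) :
    Integrable fun τ : ℝ ↦ (a + b * τ ^ 2)⁻¹ := by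
  simp only [inv_add_mul_sq_eq ha hb]
  exact (integrable_inv_one_add_sq.comp_mul_left' (by positivity)).const_mul a⁻¹

theorem integral_Ioi_zero_inv_add_mul_sq (ha : 0 < a) (hb : 0 < b) :
    ∫ τ in Set.Ioi (0 : ℝ), (a + b * τ ^ 2)⁻¹ = π / 2 * (√(a * b))⁻¹ := by
  have hscale : a * √(b / a) = √(a * b) := by
    rw [← sqrt_sq ha.le, ← sqrt_mul (sq_nonneg a), sqrt_sq ha.le]
    congr 1
    field_simp
  simp only [inv_add_mul_sq_eq ha hb]
  rw [integral_const_mul, integral_comp_mul_left_Ioi (fun y ↦ (1 + y ^ 2)⁻¹) 0 (by positivity),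
    mul_zero, integral_Ioi_inv_one_add_sq, arctan_zero, sub_zero, smul_eq_mul, ← mul_assoc,
    ← mul_inv, hscale, mul_comm]

theorem setIntegral_Ioc_zero_inv_add_mul_sq_le (ha : 0 < a) (hb : 0 < b) (t : ℝ) :
    ∫ τ in Set.Ioc 0 t, (a + b * τ ^ 2)⁻¹ ≤ π / 2 * (√(a * b))⁻¹ := by
  rw [← integral_Ioi_zero_inv_add_mul_sq ha hb]
  exact setIntegral_mono_set (integrable_inv_add_mul_sq ha hb).integrableOn
    (.of_forall fun τ ↦ by positivity) Set.Ioc_subset_Ioi_self.eventuallyLE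

end InvAddMulSq

section MinRpow

variable {p q : ℝ}

theorem eqOn_min_rpow_Ioc_zero_one (hqp : q ≤ p) :
    Set.EqOn (fun x : ℝ ↦ min (x ^ p) (x ^ q)) (fun x ↦ x ^ p) (Set.Ioc 0 1) :=
  fun _ hx ↦ min_eq_left (rpow_le_rpow_of_exponent_ge hx.1 hx.2 hqp)

theorem eqOn_min_rpow_Ioi_one (hqp : q ≤ p) :
    Set.EqOn (fun x : ℝ ↦ min (x ^ p) (x ^ q)) (fun x ↦ x ^ q) (Set.Ioi 1) :=
  fun _ hx ↦ min_eq_right (rpow_le_rpow_of_exponent_le (le_of_lt hx) hqp)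

theorem integrableOn_Ioc_zero_one_min_rpow (hp : -1 < p) (hqp : q ≤ p) :
    IntegrableOn (fun x : ℝ ↦ min (x ^ p) (x ^ q)) (Set.Ioc 0 1) := by
  rw [integrableOn_congr_fun (eqOn_min_rpow_Ioc_zero_one hqp) measurableSet_Ioc,
    ← intervalIntegrable_iff_integrableOn_Ioc_of_le zero_le_one]
  exact intervalIntegral.intervalIntegrable_rpow' hp

theorem integrableOn_Ioi_one_min_rpow (hq : q < -1) (hqp : q ≤ p) :
    IntegrableOn (fun x : ℝ ↦ min (x ^ p) (x ^ q)) (Set.Ioi 1) := by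
  rw [integrableOn_congr_fun (eqOn_min_rpow_Ioi_one hqp) measurableSet_Ioi]
  exact integrableOn_Ioi_rpow_of_lt hq one_pos

theorem integrableOn_Ioi_zero_min_rpow (hp : -1 < p) (hq : q < -1) :
    IntegrableOn (fun x : ℝ ↦ min (x ^ p) (x ^ q)) (Set.Ioi 0) := by
  have hqp : q ≤ p := (hq.trans hp).le
  rw [← Set.Ioc_union_Ioi_eq_Ioi zero_le_one]
  exact (integrableOn_Ioc_zero_one_min_rpow hp hqp).union (integrableOn_Ioi_one_min_rpow hq hqp)

theorem integral_Ioi_zero_min_rpow (hp : -1 < p) (hq : q < -1) :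
    ∫ x in Set.Ioi (0 : ℝ), min (x ^ p) (x ^ q) = (p + 1)⁻¹ - (q + 1)⁻¹ := by
  have hqp : q ≤ p := (hq.trans hp).le
  have hnear : ∫ x in Set.Ioc (0 : ℝ) 1, min (x ^ p) (x ^ q) = (p + 1)⁻¹ := by
    rw [setIntegral_congr_fun measurableSet_Ioc (eqOn_min_rpow_Ioc_zero_one hqp),
      ← intervalIntegral.integral_of_le zero_le_one, integral_rpow (.inl hp), one_rpow,
      zero_rpow (by linarith), sub_zero, one_div]
  have hfar : ∫ x in Set.Ioi (1 : ℝ), min (x ^ p) (x ^ q) = -(q + 1)⁻¹ := by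
    rw [setIntegral_congr_fun measurableSet_Ioi (eqOn_min_rpow_Ioi_one hqp),
      integral_Ioi_rpow_of_lt hq one_pos, one_rpow, neg_div, one_div]
  rw [← Set.Ioc_union_Ioi_eq_Ioi zero_le_one,
    setIntegral_union Set.Ioc_disjoint_Ioi_same measurableSet_Ioi
      (integrableOn_Ioc_zero_one_min_rpow hp hqp) (integrableOn_Ioi_one_min_rpow hq hqp),
    hnear, hfar, sub_eq_add_neg]

end MinRpow

theorem inv_sqrt_le_rpow_neg {x y s : ℝ} (hx : 0 < x) (h : x ^ (2 * s) ≤ y) :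
    (√y)⁻¹ ≤ x ^ (-s) := by
  rw [rpow_neg hx.le]
  refine inv_anti₀ (rpow_pos_of_pos hx s) (le_sqrt_of_sq_le ?_)
  rwa [← rpow_mul_natCast hx.le, Nat.cast_ofNat, mul_comm]

theorem setIntegral_Ioc_zero_inv_one_add_rpow_le {x : ℝ} (hx : 0 < x) (θ γ t : ℝ) :
    ∫ τ in Set.Ioc 0 t, (1 + x ^ (2 * θ) * τ ^ 2 + x ^ (2 * γ))⁻¹
      ≤ π / 2 * min (x ^ (-θ)) (x ^ (-(θ + γ))) := by
  have hθ : x ^ (2 * θ) ≤ (1 + x ^ (2 * γ)) * x ^ (2 * θ) :=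
    le_mul_of_one_le_left (by positivity) (le_add_of_nonneg_right (by positivity))
  have hθγ : x ^ (2 * (θ + γ)) ≤ (1 + x ^ (2 * γ)) * x ^ (2 * θ) := by
    rw [mul_add, rpow_add hx, mul_comm]
    gcongr
    exact le_add_of_nonneg_left zero_le_one
  calc ∫ τ in Set.Ioc 0 t, (1 + x ^ (2 * θ) * τ ^ 2 + x ^ (2 * γ))⁻¹
      = ∫ τ in Set.Ioc 0 t, (1 + x ^ (2 * γ) + x ^ (2 * θ) * τ ^ 2)⁻¹ := by
        simp only [add_right_comm]
    _ ≤ π / 2 * (√((1 + x ^ (2 * γ)) * x ^ (2 * θ)))⁻¹ :=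
        setIntegral_Ioc_zero_inv_add_mul_sq_le (by positivity) (by positivity) t
    _ ≤ π / 2 * min (x ^ (-θ)) (x ^ (-(θ + γ))) := by
        gcongr
        exact le_min (inv_sqrt_le_rpow_neg hx hθ) (inv_sqrt_le_rpow_neg hx hθγ)

theorem stmt_14_general {θ γ : ℝ} (hθ : θ < 1) (hθγ : 1 < θ + γ) (t : ℝ) :
    ∫ x in Set.Ioi (0 : ℝ), ∫ τ in Set.Ioc (0 : ℝ) t,
        (1 + x ^ (2 * θ) * τ ^ 2 + x ^ (2 * γ))⁻¹
      ≤ π / 2 * ((1 - θ)⁻¹ + (θ + γ - 1)⁻¹) := by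
  have hp : -1 < -θ := by linarith
  have hq : -(θ + γ) < -1 := by linarith
  calc ∫ x in Set.Ioi (0 : ℝ), ∫ τ in Set.Ioc (0 : ℝ) t,
        (1 + x ^ (2 * θ) * τ ^ 2 + x ^ (2 * γ))⁻¹
      ≤ ∫ x in Set.Ioi (0 : ℝ), π / 2 * min (x ^ (-θ)) (x ^ (-(θ + γ))) := by
        refine integral_mono_of_nonneg ?_ ((integrableOn_Ioi_zero_min_rpow hp hq).const_mul _) ?_
        all_goals filter_upwards [ae_restrict_mem measurableSet_Ioi] with x (hx : 0 < x)
        · exact integral_nonneg fun τ ↦ by positivity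
        · exact setIntegral_Ioc_zero_inv_one_add_rpow_le hx θ γ t
    _ = π / 2 * ((1 - θ)⁻¹ + (θ + γ - 1)⁻¹) := by
        rw [integral_const_mul, integral_Ioi_zero_min_rpow hp hq, sub_eq_add_neg, ← inv_neg]
        ring_nf

/-- For `0 < θ < 1/2`, `γ > 1` and `3θ + γ > 2`, the double integral
`∫_0^∞ ∫_0^t (1 + x^{2θ} τ² + x^{2γ})⁻¹ dτ dx` is bounded uniformly in `t > 0`. -/
theorem stmt_14 (θ γ : ℝ) (hθ0 : 0 < θ) (hθ : θ < 1 / 2) (hγ : 1 < γ) (h2 : 2 < 3 * θ + γ) :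
    ∃ C > 0, ∀ t : ℝ, 0 < t →
      (∫ x in Set.Ioi (0 : ℝ), ∫ τ in Set.Ioc (0 : ℝ) t,
          (1 + x ^ (2 * θ) * τ ^ 2 + x ^ (2 * γ))⁻¹) ≤ C :=
  have hpos : 0 < (1 - θ)⁻¹ + (θ + γ - 1)⁻¹ :=
    add_pos (inv_pos.2 (by linarith)) (inv_pos.2 (by linarith))
  ⟨_, mul_pos pi_div_two_pos hpos, fun t _ ↦ stmt_14_general (by linarith) (by linarith) t⟩
end

section
/- Let P ∈ S(ℝ) be compactly supported, let p, q ∈ ℝ, and fix X ∈ ℝ. Define h̃(X,ω) = q i ∫_ℝ ( P(k + X/2) − P(k − X/2) ) / ( ω − 4π² i p k X ) dk for Re ω > 0. Then lim_{ρ→∞} sup { |h̃(X,ω)| : ω ∈ ℂ, Re ω > 0, |ω| > ρ } = 0. -/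
/-!
For `|ω|` large, the denominator `ω - 4π²ipkX` stays at distance at least `|ω| - C` from zero as `k`
runs over the compact support of the numerator, `C` being the maximum of `|4π²ipkX|` there. Hence
`h̃(X, ω) = O(1 / |ω|)`.
-/

open MeasureTheory Real Filter

noncomputable section

/-- The Laplace transform `h̃(X,ω)` of the linearised Alber kernel:
`h̃(X,ω) = q i ∫ (P(k+X/2) − P(k−X/2))/(ω − 4π² i p k X) dk`. -/
def htilde (p q : ℝ) (P : ℝ → ℝ) (X : ℝ) (ω : ℂ) : ℂ :=
  (q : ℂ) * Complex.I *
    ∫ k : ℝ, ((P (k + X / 2) - P (k - X / 2) : ℝ) : ℂ) /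
      (ω - 4 * (π : ℂ) ^ 2 * Complex.I * p * k * X)

open Bornology Topology

section IntegralDivSub

variable {α 𝕜 : Type*} [MeasurableSpace α] {μ : Measure α} [NormedDivisionRing 𝕜]
  [NormedSpace ℝ 𝕜] {f g : α → 𝕜}

theorem norm_integral_div_sub_le {C : ℝ} {z : 𝕜} (hf : Integrable f μ)
    (hg : ∀ᵐ x ∂μ, f x ≠ 0 → ‖g x‖ ≤ C) (hz : C < ‖z‖) :
    ‖∫ x, f x / (z - g x) ∂μ‖ ≤ (∫ x, ‖f x‖ ∂μ) / (‖z‖ - C) := by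
  rw [← integral_div]
  refine norm_integral_le_of_norm_le (hf.norm.div_const _) ?_
  filter_upwards [hg] with x hgx
  rcases eq_or_ne (f x) 0 with hfx | hfx
  · simp [hfx]
  have hdenom : ‖z‖ - C ≤ ‖z - g x‖ := by
    linarith [norm_sub_norm_le z (g x), hgx hfx]
  rw [norm_div]
  exact div_le_div_of_nonneg_left (norm_nonneg _) (sub_pos.2 hz) hdenom

theorem tendsto_integral_div_sub_cobounded {C : ℝ} (hf : Integrable f μ)
    (hg : ∀ᵐ x ∂μ, f x ≠ 0 → ‖g x‖ ≤ C) :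
    Tendsto (fun z ↦ ∫ x, f x / (z - g x) ∂μ) (cobounded 𝕜) (𝓝 0) := by
  have hnorm : Tendsto (fun z : 𝕜 ↦ ‖z‖) (cobounded 𝕜) atTop := tendsto_norm_cobounded_atTop
  refine squeeze_zero_norm' ?_
    ((tendsto_atTop_add_const_right _ (-C) hnorm).const_div_atTop (∫ x, ‖f x‖ ∂μ))
  filter_upwards [hnorm.eventually_gt_atTop C] with z hz
  exact norm_integral_div_sub_le hf hg hz

theorem tendsto_integral_div_sub_cobounded_of_hasCompactSupport [TopologicalSpace α]
    (hf : Integrable f μ) (hfc : HasCompactSupport f) (hg : ContinuousOn g (tsupport f)) :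
    Tendsto (fun z ↦ ∫ x, f x / (z - g x) ∂μ) (cobounded 𝕜) (𝓝 0) := by
  obtain ⟨C, hC⟩ := hfc.isCompact.exists_bound_of_continuousOn hg
  exact tendsto_integral_div_sub_cobounded hf
    (.of_forall fun x hfx ↦ hC x (subset_tsupport f hfx))

end IntegralDivSub

theorem stmt_15_general {P : ℝ → ℝ} (hP : Integrable P) (hPc : HasCompactSupport P)
    (p q X : ℝ) : Tendsto (htilde p q P X) (cobounded ℂ) (𝓝 0) := by
  have hD : Integrable fun k ↦ ((P (k + X / 2) - P (k - X / 2) : ℝ) : ℂ) :=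
    ((hP.comp_add_right _).sub (hP.comp_sub_right _)).ofReal
  have hDc : HasCompactSupport fun k ↦ ((P (k + X / 2) - P (k - X / 2) : ℝ) : ℂ) :=
    ((hPc.comp_homeomorph (.addRight (X / 2))).sub
      (hPc.comp_homeomorph (.subRight (X / 2)))).comp_left Complex.ofReal_zero
  have hint := tendsto_integral_div_sub_cobounded_of_hasCompactSupport hD hDc
    (g := fun k : ℝ ↦ 4 * (π : ℂ) ^ 2 * Complex.I * p * k * X) (by fun_prop)
  unfold htilde
  simpa only [mul_zero] using hint.const_mul (q * Complex.I)

/-- Decay of `h̃(X,·)` at infinity in the right half-plane: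
`lim_{ρ→∞} sup { |h̃(X,ω)| : Re ω > 0, |ω| > ρ } = 0`. -/
theorem stmt_15 (P : SchwartzMap ℝ ℝ) (hPc : HasCompactSupport ⇑P) (p q X : ℝ) :
    ∀ ε : ℝ, 0 < ε → ∃ ρ : ℝ, ∀ ω : ℂ, 0 < ω.re → ρ < ‖ω‖ →
      ‖htilde p q (⇑P) X ω‖ < ε := by
  intro ε hε
  obtain ⟨ρ, -, hρ⟩ := hasBasis_cobounded_norm.eventually_iff.1
    ((stmt_15_general P.integrable hPc p q X).norm.eventually_lt_const (by simpa using hε))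
  exact ⟨ρ, fun ω _ hω ↦ hρ hω.le⟩

end
end

section
/- Let f ∈ S(ℝ) (Schwartz class) be compactly supported with ∫_ℝ f(t) dt = 0. Then the Hilbert transform of f is integrable: ‖H[f]‖_{L¹(ℝ)} < ∞. -/
open MeasureTheory Real Filter

noncomputable section

/-- The Hilbert transform `H[u](x) = (1/π) p.v. ∫ u(t)/(x−t) dt`, defined as the limit as
`ε → 0⁺` of the truncated integrals `(1/π) ∫_{|x−t|>ε} u(t)/(x−t) dt`. -/
def hilbertR (u : ℝ → ℝ) (x : ℝ) : ℝ :=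
  limUnder (nhdsWithin (0 : ℝ) (Set.Ioi 0))
    (fun ε : ℝ => (1 / π) * ∫ t in {t : ℝ | ε < |x - t|}, u t / (x - t))

/-! Pairing `x - s` with `x + s` turns the principal value into
`∫₀^∞ (f (x - s) - f (x + s)) / s ds`. Near `s = 0` a Hölder function makes this integrand at most
a multiple of `s ^ (r - 1)`, and for `s ≥ 1` it is controlled by the `L¹` norm of `f`; so the
principal value exists everywhere and is bounded in `x`. Far from the support the transform is
`(1/π) ∫ f t / (x - t) dt`, and since `∫ f = 0` the kernel may be replaced by
`(x - t)⁻¹ - x⁻¹ = O(x⁻²)`, which is integrable at infinity. -/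

section HilbertTransform

open Set Metric Asymptotics
open scoped Topology NNReal

variable {f : ℝ → ℝ} {x s ε R L : ℝ} {C r : ℝ≥0}

/-- The principal value defining the Hilbert transform of `f` at `x` exists and equals `L`.
Unlike the equation `hilbertR f x = L`, this excludes the junk value of `limUnder`. -/
def HasHilbertTransformAt (f : ℝ → ℝ) (x L : ℝ) : Prop :=
  Tendsto (fun ε : ℝ => (1 / π) * ∫ t in {t : ℝ | ε < |x - t|}, f t / (x - t)) (𝓝[>] 0) (𝓝 L)

lemma HasHilbertTransformAt.hilbertR_eq (h : HasHilbertTransformAt f x L) : hilbertR f x = L :=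
  h.limUnder_eq

/-- The symmetric difference quotient at `x` with step `s`, up to sign and a factor `2`: the
integrand on `(0, ∞)` obtained by folding `f t / (x - t)` about the singularity `t = x`. -/
def symmQuotient (f : ℝ → ℝ) (x s : ℝ) : ℝ :=
  (f (x - s) - f (x + s)) / s

lemma measurableSet_lt_abs (ε : ℝ) : MeasurableSet {s : ℝ | ε < |s|} :=
  measurableSet_lt measurable_const measurable_norm

lemma setIntegral_lt_abs_eq_setIntegral_Ioi {E : Type*} [NormedAddCommGroup E] [NormedSpace ℝ E]
    {h : ℝ → E} (hε : 0 ≤ ε) (hh : IntegrableOn h {s | ε < |s|}) :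
    ∫ s in {s | ε < |s|}, h s = ∫ s in Ioi ε, (h s + h (-s)) := by
  have hunion : {s : ℝ | ε < |s|} = Ioi ε ∪ Iio (-ε) := by
    ext s
    exact lt_abs.trans (or_congr_right (lt_neg (a := ε)))
  have hdisj : Disjoint (Ioi ε) (Iio (-ε)) :=
    disjoint_left.2 fun s hs hs' => (hs'.trans_le (neg_le_self hε)).not_gt hs
  rw [hunion, integrableOn_union] at hh
  have hneg : IntegrableOn (fun s => h (-s)) (Ioi ε) :=
    hh.2.comp_neg_Ioi
  rw [hunion, setIntegral_union hdisj measurableSet_Iio hh.1 hh.2, integral_add hh.1 hneg,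
    integral_comp_neg_Ioi, integral_Iic_eq_integral_Iio]

lemma integrableOn_div_lt_abs (hf : Integrable f) (hε : 0 < ε) :
    IntegrableOn (fun s => f s / s) {s | ε < |s|} := by
  simp only [div_eq_inv_mul]
  refine hf.integrableOn.bdd_mul (c := ε⁻¹) (by fun_prop) ?_
  filter_upwards [ae_restrict_mem (measurableSet_lt_abs ε)] with s hs
  rw [norm_inv]
  exact inv_anti₀ hε (le_of_lt hs)

lemma setIntegral_div_sub_eq_setIntegral_symmQuotient (hf : Integrable f) (x : ℝ)
    (hε : 0 < ε) :
    ∫ t in {t | ε < |x - t|}, f t / (x - t) = ∫ s in Ioi ε, symmQuotient f x s := by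
  have hset : MeasurableSet {t : ℝ | ε < |x - t|} :=
    (measurableSet_lt_abs ε).preimage (measurable_const_sub x)
  have htranslate : ∫ t in {t | ε < |x - t|}, f t / (x - t) =
      ∫ s in {s | ε < |s|}, f (x - s) / s := by
    rw [← integral_indicator (measurableSet_lt_abs ε), ← integral_indicator hset,
      ← integral_sub_left_eq_self _ volume x]
    simp [indicator_apply]
  rw [htranslate, setIntegral_lt_abs_eq_setIntegral_Ioi hε.le
    (integrableOn_div_lt_abs (hf.comp_sub_left x) hε)]
  simp only [symmQuotient, sub_neg_eq_add, div_neg, ← sub_eq_add_neg, sub_div]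

lemma hasHilbertTransformAt_of_integrableOn_symmQuotient (hf : Integrable f)
    (hq : IntegrableOn (symmQuotient f x) (Ioi 0)) :
    HasHilbertTransformAt f x ((1 / π) * ∫ s in Ioi 0, symmQuotient f x s) := by
  have hcover : AECover (volume.restrict (Ioi (0 : ℝ))) (𝓝[>] 0) (fun ε : ℝ => Ioi ε) :=
    aecover_Ioi_of_Ioi (tendsto_nhdsWithin_of_tendsto_nhds tendsto_id)
  refine ((hcover.integral_tendsto_of_countably_generated hq).congr' ?_).const_mul _
  filter_upwards [self_mem_nhdsWithin] with ε hε
  rw [setIntegral_div_sub_eq_setIntegral_symmQuotient hf x hε,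
    Measure.restrict_restrict measurableSet_Ioi,
    inter_eq_left.2 (Ioi_subset_Ioi (le_of_lt hε))]

lemma norm_symmQuotient_le_of_holderWith (hf : HolderWith C r f) (x : ℝ) (hs : 0 < s) :
    ‖symmQuotient f x s‖ ≤ C * 2 ^ (r : ℝ) * s ^ (r - 1 : ℝ) := by
  have hdist : dist (x - s) (x + s) = 2 * s := by
    rw [dist_comm, Real.dist_eq, add_sub_sub_cancel, abs_of_pos (by positivity), two_mul]
  have hosc : |f (x - s) - f (x + s)| ≤ C * (2 * s) ^ (r : ℝ) :=
    hdist ▸ hf.dist_le (x - s) (x + s)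
  rw [symmQuotient, norm_div, norm_of_nonneg hs.le, div_le_iff₀ hs, mul_assoc,
    ← rpow_add_one hs.ne', sub_add_cancel, mul_assoc, ← mul_rpow zero_le_two hs.le]
  exact hosc

lemma norm_symmQuotient_le_add (f : ℝ → ℝ) (x : ℝ) (hs : 1 ≤ s) :
    ‖symmQuotient f x s‖ ≤ ‖f (x - s)‖ + ‖f (x + s)‖ := by
  rw [symmQuotient, norm_div, norm_of_nonneg (zero_le_one.trans hs)]
  exact (div_le_self (norm_nonneg _) hs).trans (norm_sub_le _ _)

lemma indicator_Ioc_mul_rpow_nonneg {c : ℝ} (hc : 0 ≤ c) (p s : ℝ) :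
    0 ≤ (Ioc 0 1).indicator (fun s : ℝ => c * s ^ p) s :=
  indicator_nonneg (fun _ hu => mul_nonneg hc (rpow_nonneg hu.1.le p)) s

lemma integrable_indicator_Ioc_mul_rpow (c : ℝ) {p : ℝ} (hp : -1 < p) :
    Integrable ((Ioc 0 1).indicator fun s : ℝ => c * s ^ p) := by
  rw [integrable_indicator_iff measurableSet_Ioc,
    ← intervalIntegrable_iff_integrableOn_Ioc_of_le zero_le_one]
  exact (intervalIntegral.intervalIntegrable_rpow' hp).const_mul c

lemma integral_indicator_Ioc_mul_rpow (c : ℝ) {p : ℝ} (hp : -1 < p) :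
    ∫ s, (Ioc 0 1).indicator (fun s : ℝ => c * s ^ p) s = c / (p + 1) := by
  rw [integral_indicator measurableSet_Ioc, ← intervalIntegral.integral_of_le zero_le_one,
    intervalIntegral.integral_const_mul, integral_rpow (.inl hp), one_rpow,
    zero_rpow (by linarith), sub_zero, mul_one_div]

/-- A majorant of `symmQuotient f x` on `(0, ∞)`, for `f` with Hölder constant `C` and exponent `r`,
whose integral over `ℝ` is independent of `x`. -/
def symmQuotientMajorant (C r : ℝ≥0) (f : ℝ → ℝ) (x s : ℝ) : ℝ :=
  (Ioc 0 1).indicator (fun s : ℝ => C * 2 ^ (r : ℝ) * s ^ (r - 1 : ℝ)) s +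
    (‖f (x - s)‖ + ‖f (x + s)‖)

lemma norm_symmQuotient_le_majorant (hf : HolderWith C r f) (x : ℝ) (hs : 0 < s) :
    ‖symmQuotient f x s‖ ≤ symmQuotientMajorant C r f x s := by
  rw [symmQuotientMajorant]
  rcases le_total s 1 with hs1 | hs1
  · rw [indicator_of_mem (mem_Ioc.2 ⟨hs, hs1⟩)]
    exact (norm_symmQuotient_le_of_holderWith hf x hs).trans
      (le_add_of_nonneg_right (by positivity))
  · refine (norm_symmQuotient_le_add f x hs1).trans (le_add_of_nonneg_left ?_)
    exact indicator_Ioc_mul_rpow_nonneg (by positivity) _ s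

lemma integrable_symmQuotientMajorant (hr : 0 < r) (hf : Integrable f) (x : ℝ) :
    Integrable (symmQuotientMajorant C r f x) :=
  (integrable_indicator_Ioc_mul_rpow _ (by simpa using hr)).add
    ((hf.comp_sub_left x).norm.add (hf.comp_add_left x).norm)

lemma integral_symmQuotientMajorant (hr : 0 < r) (hf : Integrable f) (x : ℝ) :
    ∫ s, symmQuotientMajorant C r f x s = C * 2 ^ (r : ℝ) / r + 2 * ∫ t, ‖f t‖ := by
  have hexp : (-1 : ℝ) < r - 1 := by simpa using hr
  have hsub := (hf.comp_sub_left x).norm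
  have hadd := (hf.comp_add_left x).norm
  simp only [symmQuotientMajorant]
  rw [integral_add (integrable_indicator_Ioc_mul_rpow _ hexp) (hsub.fun_add hadd),
    integral_add hsub hadd, integral_indicator_Ioc_mul_rpow _ hexp, sub_add_cancel,
    integral_sub_left_eq_self (fun t => ‖f t‖) volume x,
    integral_add_left_eq_self (fun t => ‖f t‖) x, two_mul]

lemma integrableOn_symmQuotient (hr : 0 < r) (hf : HolderWith C r f) (hfi : Integrable f)
    (x : ℝ) : IntegrableOn (symmQuotient f x) (Ioi 0) := by
  have hfm : Measurable f := (hf.continuous hr).measurable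
  refine (integrable_symmQuotientMajorant (C := C) hr hfi x).integrableOn.mono'
    (Measurable.aestronglyMeasurable (by unfold symmQuotient; fun_prop)) ?_
  filter_upwards [ae_restrict_mem measurableSet_Ioi] with s hs
  exact norm_symmQuotient_le_majorant hf x hs

lemma norm_setIntegral_symmQuotient_le (hr : 0 < r) (hf : HolderWith C r f) (hfi : Integrable f)
    (x : ℝ) :
    ‖∫ s in Ioi 0, symmQuotient f x s‖ ≤ C * 2 ^ (r : ℝ) / r + 2 * ∫ t, ‖f t‖ := by
  have hmajorant := integrable_symmQuotientMajorant (C := C) hr hfi x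
  have hnonneg (s : ℝ) : 0 ≤ symmQuotientMajorant C r f x s :=
    add_nonneg (indicator_Ioc_mul_rpow_nonneg (by positivity) _ s) (by positivity)
  calc ‖∫ s in Ioi 0, symmQuotient f x s‖
    _ ≤ ∫ s in Ioi 0, symmQuotientMajorant C r f x s := by
      refine norm_integral_le_of_norm_le hmajorant.integrableOn ?_
      filter_upwards [ae_restrict_mem measurableSet_Ioi] with s hs
      exact norm_symmQuotient_le_majorant hf x hs
    _ ≤ ∫ s, symmQuotientMajorant C r f x s :=
      setIntegral_le_integral hmajorant (.of_forall hnonneg)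
    _ = C * 2 ^ (r : ℝ) / r + 2 * ∫ t, ‖f t‖ := integral_symmQuotientMajorant hr hfi x

lemma hasHilbertTransformAt_of_holderWith (hr : 0 < r) (hf : HolderWith C r f)
    (hfi : Integrable f) (x : ℝ) :
    HasHilbertTransformAt f x ((1 / π) * ∫ s in Ioi 0, symmQuotient f x s) :=
  hasHilbertTransformAt_of_integrableOn_symmQuotient hfi (integrableOn_symmQuotient hr hf hfi x)

lemma memLp_top_hilbertR (hr : 0 < r) (hf : HolderWith C r f) (hfi : Integrable f) :
    MemLp (hilbertR f) ⊤ := by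
  have hfm : Measurable f := (hf.continuous hr).measurable
  have hmeas : StronglyMeasurable fun x => ∫ s in Ioi 0, symmQuotient f x s :=
    StronglyMeasurable.integral_prod_right' (f := fun p : ℝ × ℝ => symmQuotient f p.1 p.2)
      (Measurable.stronglyMeasurable (by unfold symmQuotient; fun_prop))
  rw [show hilbertR f = fun x => (1 / π) * ∫ s in Ioi 0, symmQuotient f x s from
    funext fun x => (hasHilbertTransformAt_of_holderWith hr hf hfi x).hilbertR_eq]
  exact (memLp_top_of_bound hmeas.aestronglyMeasurable _
    (.of_forall (norm_setIntegral_symmQuotient_le hr hf hfi))).const_mul _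

lemma hasHilbertTransformAt_of_notMem_tsupport (hx : x ∉ tsupport f) :
    HasHilbertTransformAt f x ((1 / π) * ∫ t, f t / (x - t)) := by
  obtain ⟨δ, hδ, hball⟩ :=
    nhds_basis_closedBall.mem_iff.1 ((isClosed_tsupport f).isOpen_compl.mem_nhds hx)
  refine tendsto_const_nhds.congr' ?_
  filter_upwards [mem_nhdsWithin_of_mem_nhds (Iio_mem_nhds hδ)] with ε hε
  rw [setIntegral_eq_integral_of_forall_compl_eq_zero]
  intro t ht
  have hmem : t ∈ closedBall x δ := by
    rw [mem_closedBall', Real.dist_eq]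
    exact (not_lt.1 ht).trans hε.le
  rw [image_eq_zero_of_notMem_tsupport (hball hmem), zero_div]

lemma abs_inv_sub_sub_inv_le {t : ℝ} (ht : |t| ≤ R) (hx : 2 * R < |x|) :
    |(x - t)⁻¹ - x⁻¹| ≤ 2 * R / x ^ 2 := by
  have hR : 0 ≤ R := (abs_nonneg t).trans ht
  have hx0 : 0 < |x| := by linarith
  have hfar : |x| / 2 ≤ |x - t| := by linarith [abs_sub_abs_le_abs_sub x t]
  have hxt0 : 0 < |x - t| := by linarith
  rw [inv_sub_inv (abs_pos.1 hxt0) (abs_pos.1 hx0), sub_sub_cancel, abs_div, abs_mul, ← sq_abs x]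
  calc |t| / (|x - t| * |x|) ≤ R / (|x| / 2 * |x|) := by gcongr
    _ = 2 * R / |x| ^ 2 := by field_simp

lemma norm_integral_div_sub_le_s16 (hf : Integrable f) (hzero : ∫ t, f t = 0)
    (hsupp : Function.support f ⊆ closedBall 0 R) (hx : 2 * R < |x|) :
    ‖∫ t, f t / (x - t)‖ ≤ (∫ t, ‖f t‖) * (2 * R / x ^ 2) := by
  have hbound (t : ℝ) : ‖f t * ((x - t)⁻¹ - x⁻¹)‖ ≤ ‖f t‖ * (2 * R / x ^ 2) := by
    rcases eq_or_ne (f t) 0 with ht | ht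
    · simp [ht]
    · rw [norm_mul]
      gcongr
      exact abs_inv_sub_sub_inv_le (mem_closedBall_zero_iff.1 (hsupp ht)) hx
  have hdom : Integrable fun t => ‖f t‖ * (2 * R / x ^ 2) := hf.norm.mul_const _
  have hdiff : Integrable fun t => f t * ((x - t)⁻¹ - x⁻¹) :=
    hdom.mono' (hf.aestronglyMeasurable.mul (by fun_prop)) (.of_forall hbound)
  have hcancel : ∫ t, f t / (x - t) = ∫ t, f t * ((x - t)⁻¹ - x⁻¹) := by
    calc ∫ t, f t / (x - t) = ∫ t, (f t * ((x - t)⁻¹ - x⁻¹) + f t * x⁻¹) := by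
          simp only [mul_sub, sub_add_cancel, div_eq_mul_inv]
      _ = ∫ t, f t * ((x - t)⁻¹ - x⁻¹) := by
          rw [integral_add hdiff (hf.mul_const _), integral_mul_const, hzero, zero_mul, add_zero]
  rw [hcancel, ← integral_mul_const]
  exact norm_integral_le_of_norm_le hdom (.of_forall hbound)

lemma isBigO_hilbertR_cocompact (hf : Integrable f) (hfc : HasCompactSupport f)
    (hzero : ∫ t, f t = 0) : hilbertR f =O[cocompact ℝ] fun x => (x ^ 2)⁻¹ := by
  obtain ⟨R, hR⟩ := hfc.isCompact.isBounded.subset_closedBall (0 : ℝ)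
  refine .of_bound (1 / π * ((∫ t, ‖f t‖) * (2 * R))) ?_
  filter_upwards [hfc.isCompact.compl_mem_cocompact,
    tendsto_norm_cocompact_atTop.eventually_gt_atTop (2 * R)] with x hx hxR
  have hle := norm_integral_div_sub_le_s16 hf hzero ((subset_tsupport f).trans hR) hxR
  rw [(hasHilbertTransformAt_of_notMem_tsupport hx).hilbertR_eq]
  calc ‖1 / π * ∫ t, f t / (x - t)‖
    _ = 1 / π * ‖∫ t, f t / (x - t)‖ := by rw [norm_mul, norm_of_nonneg (by positivity)]
    _ ≤ 1 / π * ((∫ t, ‖f t‖) * (2 * R / x ^ 2)) := by gcongr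
    _ = 1 / π * ((∫ t, ‖f t‖) * (2 * R)) * ‖(x ^ 2)⁻¹‖ := by
      rw [norm_of_nonneg (inv_nonneg.2 (sq_nonneg x))]
      ring

lemma integrableAtFilter_inv_sq_cocompact :
    IntegrableAtFilter (fun x : ℝ => (x ^ 2)⁻¹) (cocompact ℝ) := by
  have hO : (fun x : ℝ => (x ^ 2)⁻¹) =O[cocompact ℝ] fun x => (1 + x ^ 2)⁻¹ := by
    refine .of_bound 2 ?_
    filter_upwards [tendsto_norm_cocompact_atTop.eventually_ge_atTop 1] with x hx
    have hx2 : 1 ≤ x ^ 2 := (one_le_sq_iff_one_le_abs x).2 hx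
    rw [norm_of_nonneg (by positivity), norm_of_nonneg (by positivity), ← div_eq_mul_inv,
      inv_le_comm₀ (by positivity) (by positivity), inv_div]
    linarith
  have hmeas : StronglyMeasurable fun x : ℝ => (x ^ 2)⁻¹ :=
    Measurable.stronglyMeasurable (by fun_prop)
  exact hO.integrableAtFilter hmeas.stronglyMeasurableAtFilter
    (integrable_inv_one_add_sq.integrableAtFilter _)

end HilbertTransform

theorem stmt_16_general {f : ℝ → ℝ} {C r : NNReal} (hr : 0 < r) (hf : HolderWith C r f)
    (hfc : HasCompactSupport f) (hint : ∫ t, f t = 0) :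
    (∀ x, ∃ L, HasHilbertTransformAt f x L) ∧ Integrable (hilbertR f) := by
  have hfi : Integrable f := (hf.continuous hr).integrable_of_hasCompactSupport hfc
  have hloc : LocallyIntegrable (hilbertR f) :=
    (memLp_top_hilbertR hr hf hfi).locallyIntegrable le_top
  exact ⟨fun x => ⟨_, hasHilbertTransformAt_of_holderWith hr hf hfi x⟩,
    hloc.integrable_of_isBigO_cocompact (isBigO_hilbertR_cocompact hfi hfc hint)
      integrableAtFilter_inv_sq_cocompact⟩

/-- Conditional integrability of the Hilbert transform: if `f` is a compactly
supported Schwartz function with `∫ f = 0`, then the principal-value limits defining `H[f]`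
exist and `H[f] ∈ L¹(ℝ)`. -/
theorem stmt_16 (f : SchwartzMap ℝ ℝ) (hfc : HasCompactSupport ⇑f)
    (hint : (∫ t : ℝ, f t) = 0) :
    (∀ x : ℝ, ∃ L : ℝ,
      Tendsto (fun ε : ℝ => (1 / π) * ∫ t in {t : ℝ | ε < |x - t|}, f t / (x - t))
        (nhdsWithin (0 : ℝ) (Set.Ioi 0)) (nhds L)) ∧
    Integrable (hilbertR ⇑f) := by
  obtain ⟨C, hC⟩ := (f.smooth 1).lipschitzWith_of_hasCompactSupport hfc one_ne_zero
  exact stmt_16_general one_pos (holderWith_one.2 hC) hfc hint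

end
end

section
/- Let P ∈ S(ℝ) be compactly supported and let p ≠ 0 and q ≠ 0 be real. Define h̃(X,ω) = q i ∫_ℝ ( P(k + X/2) − P(k − X/2) ) / ( ω − 4π² i p k X ) dk for X ∈ ℝ, Re ω > 0. Then inf { |1 − h̃(X,ω)| : X ∈ ℝ, Re ω > 0 } = 0 if and only if at least one of the following holds: (i) there exist X* ∈ ℝ and Ω* ∈ ℂ∖ℝ such that H[D_{X*}P](Ω*) = H[D_{X*}P](conj(Ω*)) = 4πp/q; or (ii) there exist X*, Ω* ∈ ℝ such that H[D_{X*}P](Ω*) = 4πp/q and D_{X*}P(Ω*) = 0. -/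
open MeasureTheory Real Filter

noncomputable section

/-- The finite difference quotient `D_X P(k) = (P(k+X/2) − P(k−X/2))/X`, with `D_0 P = P'`. -/
def DXP (P : ℝ → ℝ) (X k : ℝ) : ℝ :=
  if X = 0 then deriv P k else (P (k + X / 2) - P (k - X / 2)) / X

/-- The Hilbert transform at a non-real complex point: `H[u](z) = (1/π) ∫ u(t)/(z−t) dt`. -/
def hilbertC (u : ℝ → ℝ) (z : ℂ) : ℂ :=
  (1 / (π : ℂ)) * ∫ t : ℝ, (u t : ℂ) / (z - t)

/-!
Substituting `ω = 4π² i p X z` turns `h̃(X, ω)` into `H[D_X P](z) / c` with `c = 4πp/q`, so the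
infimum vanishes iff `c` lies in the closure of the values `H[D_X P](z)` with `X ≠ 0` and
`Im z ≠ 0`; as `c` is real, reflecting `z` in the real axis does no harm. By Sokhotski–Plemelj,
`H[D_X P]` extends continuously, jointly in `X` and `z`, from the upper half-plane to the real axis,
where its value is `H[D_X P](x) - i D_X P(x)`. Reflected to all of `ℝ × ℂ`, this extension tends to
`0` at infinity, so its range together with `0` is compact. Hence `c ≠ 0` is in the closure iff it
is attained: off the real axis this is (i), on the real axis it is (ii).
-/

open scoped Topology NNReal ComplexConjugate

section Poisson

variable {u : ℝ → ℝ} {x : ℝ}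

/-- The conjugate Poisson integral `(1/π) ∫ u(x - s) s/(s² + y²) ds`, folded onto `s > 0` so that it
still makes sense, as a principal value, on the boundary `y = 0`. -/
def conjPoissonIntegral (u : ℝ → ℝ) (x y : ℝ) : ℝ :=
  (1 / π) * ∫ s in Set.Ioi (0 : ℝ), (u (x - s) - u (x + s)) * (s / (s ^ 2 + y ^ 2))

/-- The Poisson integral `(1/π) ∫ u(x - s) y/(s² + y²) ds`, rescaled by `s = y r` so that it still
makes sense on the boundary `y = 0`. -/
def poissonIntegral (u : ℝ → ℝ) (x y : ℝ) : ℝ :=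
  (1 / π) * ∫ r : ℝ, u (x - y * r) * (1 + r ^ 2)⁻¹

theorem conjPoissonIntegral_neg (u : ℝ → ℝ) (x y : ℝ) :
    conjPoissonIntegral u x (-y) = conjPoissonIntegral u x y := by
  simp only [conjPoissonIntegral, neg_sq]

theorem poissonIntegral_neg (u : ℝ → ℝ) (x y : ℝ) :
    poissonIntegral u x (-y) = poissonIntegral u x y := by
  rw [poissonIntegral, poissonIntegral, ← integral_neg_eq_self]
  simp only [neg_mul_neg, neg_sq]

theorem div_sq_add_zero_sq (s : ℝ) : s / (s ^ 2 + 0 ^ 2) = s⁻¹ := by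
  rw [zero_pow two_ne_zero, add_zero, sq, div_self_mul_self']

theorem conjPoissonIntegral_zero (u : ℝ → ℝ) (x : ℝ) :
    conjPoissonIntegral u x 0 =
      (1 / π) * ∫ s in Set.Ioi (0 : ℝ), (u (x - s) - u (x + s)) / s := by
  simp_rw [conjPoissonIntegral, div_sq_add_zero_sq, div_eq_mul_inv]

theorem poissonIntegral_zero (u : ℝ → ℝ) (x : ℝ) : poissonIntegral u x 0 = u x := by
  have := pi_ne_zero
  simp only [poissonIntegral, zero_mul, sub_zero, integral_const_mul, integral_univ_inv_one_add_sq]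
  field_simp

theorem integral_eq_integral_Ioi_add_comp_neg {g : ℝ → ℝ} (hg : Integrable g) :
    ∫ s, g s = ∫ s in Set.Ioi (0 : ℝ), (g s + g (-s)) := by
  rw [integral_add hg.integrableOn hg.comp_neg.integrableOn, integral_comp_neg_Ioi, neg_zero,
    add_comm, ← Set.compl_Iic, integral_add_compl measurableSet_Iic hg]

theorem conjPoissonIntegral_eq_integral {y : ℝ}
    (hi : Integrable fun s => u (x - s) * (s / (s ^ 2 + y ^ 2))) :
    conjPoissonIntegral u x y = (1 / π) * ∫ s, u (x - s) * (s / (s ^ 2 + y ^ 2)) := by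
  rw [integral_eq_integral_Ioi_add_comp_neg hi, conjPoissonIntegral]
  simp only [sub_neg_eq_add, neg_sq, neg_div, mul_neg, ← sub_eq_add_neg, ← sub_mul]

theorem poissonIntegral_eq_integral (u : ℝ → ℝ) (x : ℝ) {y : ℝ} (hy : 0 < y) :
    poissonIntegral u x y = (1 / π) * ∫ s, u (x - s) * (y / (s ^ 2 + y ^ 2)) := by
  have hscale := Measure.integral_comp_mul_left (fun s => u (x - s) * (y / (s ^ 2 + y ^ 2))) y
  rw [abs_of_pos (inv_pos.mpr hy), smul_eq_mul, eq_inv_mul_iff_mul_eq₀ hy.ne',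
    ← integral_const_mul] at hscale
  rw [← hscale, poissonIntegral]
  congr 2 with r
  have : 1 + r ^ 2 ≠ 0 := by positivity
  field_simp
  ring

end Poisson

section Cauchy

variable {u : ℝ → ℝ} {z : ℂ}

theorem hilbertC_conj (u : ℝ → ℝ) (z : ℂ) : hilbertC u (conj z) = conj (hilbertC u z) := by
  rw [hilbertC, hilbertC, map_mul, ← integral_conj]
  simp

theorem integrable_div_sub (hu : Integrable u) (hz : z.im ≠ 0) :
    Integrable fun t : ℝ => (u t : ℂ) / (z - t) := by
  have hbound : ∀ t : ℝ, ‖(z - t)⁻¹‖ ≤ |z.im|⁻¹ := fun t => by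
    rw [norm_inv]
    exact inv_anti₀ (abs_pos.mpr hz) (by simpa using Complex.abs_im_le_norm (z - t))
  simp_rw [div_eq_mul_inv]
  exact hu.ofReal.mul_bdd (Measurable.aestronglyMeasurable (by fun_prop)) (ae_of_all _ hbound)

theorem re_hilbertC (hu : Integrable u) (hz : z.im ≠ 0) :
    (hilbertC u z).re = conjPoissonIntegral u z.re z.im := by
  have hi := (integrable_div_sub hu hz).comp_sub_left z.re
  have hkernel : ∀ s : ℝ, ((u (z.re - s) : ℂ) / (z - (z.re - s : ℝ))).re =
      u (z.re - s) * (s / (s ^ 2 + z.im ^ 2)) := fun s => by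
    simp [Complex.div_re, Complex.normSq_apply, sq, mul_div_assoc]
  have hint : ∫ s, u (z.re - s) * (s / (s ^ 2 + z.im ^ 2)) =
      (∫ s : ℝ, (u (z.re - s) : ℂ) / (z - (z.re - s : ℝ))).re := by
    simpa only [RCLike.re_eq_complex_re, hkernel] using integral_re hi
  have hre : Integrable fun s => u (z.re - s) * (s / (s ^ 2 + z.im ^ 2)) := by
    simpa only [RCLike.re_eq_complex_re, hkernel] using hi.re
  rw [conjPoissonIntegral_eq_integral hre, hint, hilbertC,
    ← integral_sub_left_eq_self _ volume z.re, ← Complex.ofReal_one, ← Complex.ofReal_div,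
    Complex.re_ofReal_mul]

theorem im_hilbertC (hu : Integrable u) (hz : 0 < z.im) :
    (hilbertC u z).im = -poissonIntegral u z.re z.im := by
  have hi := (integrable_div_sub hu hz.ne').comp_sub_left z.re
  have hkernel : ∀ s : ℝ, ((u (z.re - s) : ℂ) / (z - (z.re - s : ℝ))).im =
      -(u (z.re - s) * (z.im / (s ^ 2 + z.im ^ 2))) := fun s => by
    simp [Complex.div_im, Complex.normSq_apply, sq, mul_div_assoc]
  have hint : -∫ s, u (z.re - s) * (z.im / (s ^ 2 + z.im ^ 2)) =
      (∫ s : ℝ, (u (z.re - s) : ℂ) / (z - (z.re - s : ℝ))).im := by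
    simpa only [RCLike.im_eq_complex_im, hkernel, integral_neg] using integral_im hi
  rw [poissonIntegral_eq_integral u z.re hz, ← mul_neg, hint, hilbertC,
    ← integral_sub_left_eq_self _ volume z.re, ← Complex.ofReal_one, ← Complex.ofReal_div,
    Complex.im_ofReal_mul]

theorem mul_norm_hilbertC_le {R : ℝ} (hu : Integrable u) (hR : ∀ k, R < |k| → u k = 0) (z : ℂ) :
    (‖z‖ - R) * ‖hilbertC u z‖ ≤ (1 / π) * ∫ t, |u t| := by
  rcases le_or_gt ‖z‖ R with hzR | hzR
  · exact (mul_nonpos_of_nonpos_of_nonneg (sub_nonpos.mpr hzR) (norm_nonneg _)).trans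
      (by positivity)
  have hpos : 0 < ‖z‖ - R := sub_pos.mpr hzR
  have hpoint : ∀ t : ℝ, ‖(u t : ℂ) / (z - t)‖ ≤ (‖z‖ - R)⁻¹ * |u t| := fun t => by
    rcases le_or_gt |t| R with ht | ht
    · have hdist : ‖z‖ - R ≤ ‖z - t‖ := by
        have := norm_sub_norm_le z (t : ℂ)
        rw [Complex.norm_real, Real.norm_eq_abs] at this
        linarith
      rw [norm_div, Complex.norm_real, Real.norm_eq_abs, div_eq_inv_mul]
      gcongr
    · simp [hR t ht]
  have hint : ‖∫ t : ℝ, (u t : ℂ) / (z - t)‖ ≤ (‖z‖ - R)⁻¹ * ∫ t, |u t| := by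
    rw [← integral_const_mul]
    exact norm_integral_le_of_norm_le (hu.abs.const_mul _) (ae_of_all _ hpoint)
  rw [le_inv_mul_iff₀ hpos] at hint
  rw [hilbertC, norm_mul, norm_div, norm_one, Complex.norm_real, Real.norm_of_nonneg pi_pos.le,
    mul_left_comm]
  gcongr

end Cauchy

section PrincipalValue

variable {u : ℝ → ℝ}

theorem integrable_indicator_comp_sub_div (hu : Integrable u) (x : ℝ) {ε : ℝ} (hε : 0 < ε) :
    Integrable ({s : ℝ | ε < |s|}.indicator fun s => u (x - s) / s) := by
  have hm : MeasurableSet {s : ℝ | ε < |s|} := measurableSet_lt measurable_const (by fun_prop)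
  have hux : Integrable fun s => u (x - s) := hu.comp_sub_left x
  rw [integrable_indicator_iff hm]
  simp_rw [div_eq_mul_inv]
  refine hux.integrableOn.mul_bdd (c := ε⁻¹) (Measurable.aestronglyMeasurable (by fun_prop)) ?_
  filter_upwards [ae_restrict_mem hm] with s hs
  rw [norm_inv]
  exact inv_anti₀ hε (le_of_lt hs)

theorem setIntegral_div_sub_eq (hu : Integrable u) (x : ℝ) {ε : ℝ} (hε : 0 < ε) :
    ∫ t in {t : ℝ | ε < |x - t|}, u t / (x - t) =
      ∫ s in Set.Ioi ε, (u (x - s) - u (x + s)) / s := by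
  have hm : MeasurableSet {t : ℝ | ε < |x - t|} := measurableSet_lt measurable_const (by fun_prop)
  calc
    _ = ∫ s, {s : ℝ | ε < |s|}.indicator (fun s => u (x - s) / s) s := by
      rw [← integral_indicator hm, ← integral_sub_left_eq_self _ volume x]
      simp [Set.indicator_apply]
    _ = ∫ s in Set.Ioi 0, (Set.Ioi ε).indicator (fun s => (u (x - s) - u (x + s)) / s) s := by
      rw [integral_eq_integral_Ioi_add_comp_neg (integrable_indicator_comp_sub_div hu x hε)]
      refine setIntegral_congr_fun measurableSet_Ioi fun s hs => ?_
      have hs : 0 < s := hs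
      by_cases h : ε < s
      · simp [h, abs_of_pos hs, sub_div, div_neg, ← sub_eq_add_neg]
      · simp [h, abs_of_pos hs]
    _ = _ := by
      rw [setIntegral_indicator measurableSet_Ioi, Set.Ioi_inter_Ioi, sup_of_le_right hε.le]

/-- The hypothesis `hDini` is the Dini condition, under which the principal value converges. -/
theorem hilbertR_eq_conjPoissonIntegral (hu : Integrable u) {x : ℝ}
    (hDini : IntegrableOn (fun s => (u (x - s) - u (x + s)) / s) (Set.Ioi 0)) :
    hilbertR u x = conjPoissonIntegral u x 0 := by
  rw [conjPoissonIntegral_zero]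
  refine Tendsto.limUnder_eq (Tendsto.const_mul _ ?_)
  have hcover : AECover (volume.restrict (Set.Ioi 0)) (𝓝[>] (0 : ℝ)) Set.Ioi :=
    aecover_Ioi_of_Ioi (tendsto_id.mono_left nhdsWithin_le_nhds)
  refine (hcover.integral_tendsto_of_countably_generated hDini).congr' ?_
  filter_upwards [self_mem_nhdsWithin] with ε hε
  rw [setIntegral_div_sub_eq hu x hε, Measure.restrict_restrict measurableSet_Ioi,
    Set.Ioi_inter_Ioi, sup_of_le_left (le_of_lt hε)]

end PrincipalValue

section Holder

variable {u : ℝ → ℝ} {C r : ℝ≥0}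

theorem abs_symm_sub_mul_le (hu : HolderWith C r u) (x y : ℝ) {s : ℝ} (hs : 0 < s) :
    |(u (x - s) - u (x + s)) * (s / (s ^ 2 + y ^ 2))| ≤ C * 2 ^ (r : ℝ) * s ^ (r - 1 : ℝ) := by
  have hdiff : |u (x - s) - u (x + s)| ≤ C * (2 * s) ^ (r : ℝ) := by
    have hdist : |x - s - (x + s)| = 2 * s := by
      rw [show x - s - (x + s) = -(2 * s) by ring, abs_neg, abs_of_pos (by positivity)]
    simpa only [Real.dist_eq, hdist] using hu.dist_le (x - s) (x + s)
  have hker : |s / (s ^ 2 + y ^ 2)| ≤ s⁻¹ := by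
    rw [abs_of_pos (by positivity), div_le_iff₀ (by positivity), mul_add, sq, inv_mul_cancel_left₀
      hs.ne']
    exact le_add_of_nonneg_right (by positivity)
  calc
    _ ≤ C * (2 * s) ^ (r : ℝ) * s⁻¹ := by rw [abs_mul]; gcongr
    _ = _ := by rw [mul_rpow zero_le_two hs.le, rpow_sub_one hs.ne']; ring

theorem symm_sub_eq_zero {R : ℝ} (hR : ∀ k, R < |k| → u k = 0) {x s : ℝ} (hs : |x| + R < s) :
    u (x - s) - u (x + s) = 0 := by
  have hsub := neg_le_abs (x - s)
  have hadd := le_abs_self (x + s)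
  obtain ⟨hx_lower, hx_upper⟩ := abs_le.mp (le_refl |x|)
  rw [hR _ (by linarith), hR _ (by linarith), sub_zero]

theorem norm_symm_sub_mul_le_indicator (hu : HolderWith C r u) {R : ℝ}
    (hR : ∀ k, R < |k| → u k = 0) {x y s S : ℝ} (hS : |x| + R ≤ S) (hs : 0 < s) :
    ‖(u (x - s) - u (x + s)) * (s / (s ^ 2 + y ^ 2))‖ ≤
      (Set.Iic S).indicator (fun s => C * 2 ^ (r : ℝ) * s ^ (r - 1 : ℝ)) s := by
  rcases le_or_gt s S with h | h
  · rw [Set.indicator_of_mem (Set.mem_Iic.mpr h)]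
    exact abs_symm_sub_mul_le hu x y hs
  · simp [symm_sub_eq_zero hR (hS.trans_lt h), h.not_ge]

theorem integrableOn_indicator_Iic_rpow (S c : ℝ) {a : ℝ} (ha : -1 < a) :
    IntegrableOn ((Set.Iic S).indicator fun s => c * s ^ a) (Set.Ioi 0) := by
  rw [IntegrableOn, integrable_indicator_iff measurableSet_Iic, IntegrableOn,
    Measure.restrict_restrict measurableSet_Iic, Set.inter_comm, Set.Ioi_inter_Iic]
  exact (intervalIntegral.intervalIntegrable_rpow' ha).1.const_mul c

theorem integrableOn_symm_sub_div (hu : HolderWith C r u) (hr : 0 < r) {R : ℝ}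
    (hR : ∀ k, R < |k| → u k = 0) (x : ℝ) :
    IntegrableOn (fun s => (u (x - s) - u (x + s)) / s) (Set.Ioi 0) := by
  have := hu.continuous hr
  refine (integrableOn_indicator_Iic_rpow (|x| + R) (C * 2 ^ (r : ℝ)) (a := r - 1)
    (by simpa using hr)).mono' (Measurable.aestronglyMeasurable (by fun_prop)) ?_
  filter_upwards [ae_restrict_mem measurableSet_Ioi] with s hs
  refine (Eq.le ?_).trans (norm_symm_sub_mul_le_indicator hu hR (y := 0) le_rfl hs)
  rw [div_sq_add_zero_sq, div_eq_mul_inv]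

end Holder

section Extension

variable {u : ℝ → ℝ} {z : ℂ} {C r : ℝ≥0} {R : ℝ}

/-- The extension of `H[u]` from the upper half-plane to a function on all of `ℂ`: by boundary
values from above on the real axis, and by reflection, `z ↦ H[u](z̄)`, on the lower half-plane. -/
def hilbertExt (u : ℝ → ℝ) (z : ℂ) : ℂ :=
  conjPoissonIntegral u z.re z.im - poissonIntegral u z.re z.im * Complex.I

theorem hilbertExt_conj (u : ℝ → ℝ) (z : ℂ) : hilbertExt u (conj z) = hilbertExt u z := by
  simp only [hilbertExt, Complex.conj_re, Complex.conj_im, conjPoissonIntegral_neg,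
    poissonIntegral_neg]

theorem hilbertExt_eq_hilbertC (hu : Integrable u) (hz : 0 < z.im) :
    hilbertExt u z = hilbertC u z := by
  apply Complex.ext
  · simp [hilbertExt, re_hilbertC hu hz.ne']
  · simp [hilbertExt, im_hilbertC hu hz]

theorem norm_ofReal_sub_hilbertExt (hu : Integrable u) (hz : z.im ≠ 0) (c : ℝ) :
    ‖(c : ℂ) - hilbertExt u z‖ = ‖(c : ℂ) - hilbertC u z‖ := by
  rcases lt_or_gt_of_ne hz with hneg | hpos
  · have hconj : 0 < (conj z).im := by simpa using hneg
    rw [← hilbertExt_conj, hilbertExt_eq_hilbertC hu hconj, hilbertC_conj, ← Complex.conj_ofReal,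
      ← map_sub, Complex.norm_conj, Complex.conj_ofReal]
  · rw [hilbertExt_eq_hilbertC hu hpos]

theorem norm_hilbertExt (hu : Integrable u) (hz : z.im ≠ 0) :
    ‖hilbertExt u z‖ = ‖hilbertC u z‖ := by
  simpa using norm_ofReal_sub_hilbertExt hu hz 0

theorem hilbertExt_eq_ofReal_iff (hu : Integrable u) (hz : z.im ≠ 0) (c : ℝ) :
    hilbertExt u z = c ↔ hilbertC u z = c := by
  rw [eq_comm, ← sub_eq_zero, ← norm_eq_zero, norm_ofReal_sub_hilbertExt hu hz, norm_eq_zero,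
    sub_eq_zero, eq_comm]

/-- The Sokhotski–Plemelj formula. -/
theorem hilbertExt_ofReal (hu : Integrable u) (hHolder : HolderWith C r u) (hr : 0 < r)
    (hR : ∀ k, R < |k| → u k = 0) (x : ℝ) :
    hilbertExt u x = hilbertR u x - u x * Complex.I := by
  rw [hilbertR_eq_conjPoissonIntegral hu (integrableOn_symm_sub_div hHolder hr hR x)]
  simp [hilbertExt, poissonIntegral_zero]

theorem exists_hilbertExt_eq_ofReal_iff (hu : Integrable u) (hHolder : HolderWith C r u)
    (hr : 0 < r) (hR : ∀ k, R < |k| → u k = 0) (c : ℝ) :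
    (∃ z, hilbertExt u z = c) ↔
      (∃ z : ℂ, z.im ≠ 0 ∧ hilbertC u z = c ∧ hilbertC u (conj z) = c) ∨
        ∃ x : ℝ, hilbertR u x = c ∧ u x = 0 := by
  have hreal (x : ℝ) : hilbertExt u x = c ↔ hilbertR u x = c ∧ u x = 0 := by
    rw [hilbertExt_ofReal hu hHolder hr hR, Complex.ext_iff]
    simp
  constructor
  · rintro ⟨z, hz⟩
    by_cases him : z.im = 0
    · lift z to ℝ using him
      exact Or.inr ⟨z, (hreal z).mp hz⟩
    · have hval := (hilbertExt_eq_ofReal_iff hu him c).mp hz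
      exact Or.inl ⟨z, him, hval, by rw [hilbertC_conj, hval, Complex.conj_ofReal]⟩
  · rintro (⟨z, him, hval, -⟩ | ⟨x, hx⟩)
    · exact ⟨z, (hilbertExt_eq_ofReal_iff hu him c).mpr hval⟩
    · exact ⟨x, (hreal x).mpr hx⟩

end Extension

section Continuity

variable {T : Type*} [TopologicalSpace T] [FirstCountableTopology T] {u : T → ℝ → ℝ} {C r : ℝ≥0}

theorem continuous_conjPoissonIntegral (hu : Continuous (Function.uncurry u))
    (hHolder : ∀ X, HolderWith C r (u X)) (hr : 0 < r) {R : T → ℝ} (hRc : Continuous R)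
    (hR : ∀ X k, R X < |k| → u X k = 0) :
    Continuous fun v : T × ℝ × ℝ => conjPoissonIntegral (u v.1) v.2.1 v.2.2 := by
  refine continuous_const.mul (continuous_iff_continuousAt.mpr ?_)
  rintro ⟨X₀, x₀, y₀⟩
  have hsupp : ∀ᶠ v : T × ℝ × ℝ in 𝓝 (X₀, x₀, y₀), |v.2.1| + R v.1 < |x₀| + R X₀ + 1 := by
    have hc : Continuous fun v : T × ℝ × ℝ => |v.2.1| + R v.1 := by fun_prop
    exact hc.continuousAt.eventually_lt continuousAt_const (lt_add_one _)
  refine continuousAt_of_dominated ?_ ?_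
    (integrableOn_indicator_Iic_rpow (|x₀| + R X₀ + 1) (C * 2 ^ (r : ℝ)) (a := r - 1)
      (by simpa using hr)) ?_
  · exact Eventually.of_forall fun v =>
      (Continuous.aestronglyMeasurable (by fun_prop)).mul
        (Measurable.aestronglyMeasurable (by fun_prop))
  · filter_upwards [hsupp] with v hv
    filter_upwards [ae_restrict_mem measurableSet_Ioi] with s hs
    exact norm_symm_sub_mul_le_indicator (hHolder _) (hR _) hv.le hs
  · filter_upwards [ae_restrict_mem measurableSet_Ioi] with s hs
    have hs : 0 < s := hs
    refine Continuous.continuousAt (Continuous.mul (by fun_prop) ?_)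
    exact continuous_const.div (by fun_prop) fun v => by positivity

theorem continuous_poissonIntegral (hu : Continuous (Function.uncurry u)) {M : ℝ}
    (hM : ∀ X k, |u X k| ≤ M) :
    Continuous fun v : T × ℝ × ℝ => poissonIntegral (u v.1) v.2.1 v.2.2 := by
  refine continuous_const.mul (continuous_of_dominated (bound := fun r => M * (1 + r ^ 2)⁻¹) ?_ ?_
    (integrable_inv_one_add_sq.const_mul M) ?_)
  · exact fun v => (Continuous.aestronglyMeasurable (by fun_prop)).mul
      (Measurable.aestronglyMeasurable (by fun_prop))
  · refine fun v => ae_of_all _ fun r => ?_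
    rw [norm_mul, Real.norm_of_nonneg (by positivity : 0 ≤ (1 + r ^ 2)⁻¹)]
    exact mul_le_mul_of_nonneg_right (hM _ _) (by positivity)
  · exact ae_of_all _ fun r => Continuous.mul (by fun_prop) continuous_const

theorem continuous_hilbertExt_family (hu : Continuous (Function.uncurry u))
    (hHolder : ∀ X, HolderWith C r (u X)) (hr : 0 < r) {R : T → ℝ} (hRc : Continuous R)
    (hR : ∀ X k, R X < |k| → u X k = 0) {M : ℝ} (hM : ∀ X k, |u X k| ≤ M) :
    Continuous fun v : T × ℂ => hilbertExt (u v.1) v.2 := by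
  have hcoord : Continuous fun v : T × ℂ => (v.1, v.2.re, v.2.im) := by fun_prop
  have hconj := (continuous_conjPoissonIntegral hu hHolder hr hRc hR).comp hcoord
  have hpois := (continuous_poissonIntegral hu hM).comp hcoord
  exact (Complex.continuous_ofReal.comp hconj).sub
    ((Complex.continuous_ofReal.comp hpois).mul continuous_const)

end Continuity

section Decay

variable {u : ℝ → ℝ} {C r : ℝ≥0}

theorem continuous_hilbertExt (hHolder : HolderWith C r u) (hr : 0 < r)
    (hc : HasCompactSupport u) : Continuous (hilbertExt u) := by
  have hu := hHolder.continuous hr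
  obtain ⟨R, -, hR⟩ := hc.exists_pos_le_norm
  obtain ⟨M, hM⟩ := hu.bounded_above_of_compact_support hc
  have hfamily := continuous_hilbertExt_family (u := fun _ : Unit => u) (by fun_prop)
    (fun _ => hHolder) hr (continuous_const (y := R)) (fun _ k hk => hR k hk.le) fun _ => hM
  exact hfamily.comp (Continuous.prodMk_right ())

theorem tendsto_cocompact_zero_of_mul_norm_le {E F : Type*} [SeminormedAddCommGroup E]
    [ProperSpace E] [SeminormedAddCommGroup F] {f : E → F} {R B : ℝ}
    (h : ∀ v, (‖v‖ - R) * ‖f v‖ ≤ B) : Tendsto f (cocompact E) (𝓝 0) := by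
  have hnorm : Tendsto (fun v : E => ‖v‖ - R) (cocompact E) atTop :=
    tendsto_atTop_add_const_right _ _ tendsto_norm_cocompact_atTop
  refine squeeze_zero_norm' ?_ (hnorm.const_div_atTop B)
  filter_upwards [hnorm.eventually_gt_atTop 0] with v hv
  exact (le_div_iff₀' hv).mpr (h v)

theorem dense_setOf_im_ne_zero : Dense {z : ℂ | z.im ≠ 0} :=
  (dense_compl_singleton (0 : ℝ)).preimage Complex.isOpenMap_im

theorem mul_norm_hilbertExt_le (hu : Integrable u) (hcont : Continuous (hilbertExt u))
    {b : ℂ → ℝ} (hb : Continuous b) {B : ℝ} (h : ∀ z, z.im ≠ 0 → b z * ‖hilbertC u z‖ ≤ B)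
    (z : ℂ) : b z * ‖hilbertExt u z‖ ≤ B := by
  have hclosed : IsClosed {z | b z * ‖hilbertExt u z‖ ≤ B} :=
    isClosed_le (by fun_prop) continuous_const
  refine hclosed.closure_subset_iff.mpr (fun w hw => ?_) (dense_setOf_im_ne_zero z)
  simpa only [Set.mem_ofPred_eq, norm_hilbertExt hu hw] using h w hw

theorem exists_norm_hilbertC_le (hHolder : HolderWith C r u) (hr : 0 < r)
    (hc : HasCompactSupport u) :
    ∃ B, ∀ z : ℂ, z.im ≠ 0 → ‖hilbertC u z‖ ≤ B := by
  obtain ⟨R, -, hR⟩ := hc.exists_pos_le_norm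
  have hu : Integrable u := (hHolder.continuous hr).integrable_of_hasCompactSupport hc
  have hcont := continuous_hilbertExt hHolder hr hc
  have hdecay : Tendsto (hilbertExt u) (cocompact ℂ) (𝓝 0) :=
    tendsto_cocompact_zero_of_mul_norm_le <| mul_norm_hilbertExt_le hu hcont (by fun_prop)
      fun z _ => mul_norm_hilbertC_le hu (fun k hk => hR k hk.le) z
  obtain ⟨B, hB⟩ := (hdecay.isCompact_insert_range_of_cocompact hcont).isBounded.exists_norm_le
  exact ⟨B, fun z hz => norm_hilbertExt hu hz ▸ hB _ (Or.inr ⟨z, rfl⟩)⟩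

end Decay

section DifferenceQuotient

variable {P : ℝ → ℝ} {C r : ℝ≥0} {R M : ℝ}

theorem DXP_eq_integral (hP : ContDiff ℝ 1 P) (X k : ℝ) :
    DXP P X k = ∫ τ in (0 : ℝ)..1, deriv P (k + X * (τ - 1 / 2)) := by
  rcases eq_or_ne X 0 with rfl | hX
  · simp [DXP]
  have hderiv : ∀ τ : ℝ, HasDerivAt (fun τ : ℝ => P (k + X * (τ - 1 / 2)) / X)
      (deriv P (k + X * (τ - 1 / 2))) τ := fun τ => by
    have hinner : HasDerivAt (fun τ : ℝ => k + X * (τ - 1 / 2)) X τ := by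
      simpa only [id, mul_one] using (((hasDerivAt_id τ).sub_const (1 / 2)).const_mul X).const_add k
    have houter := (hP.differentiable one_ne_zero (k + X * (τ - 1 / 2))).hasDerivAt
    have hcomp := (houter.comp τ hinner).div_const X
    rwa [mul_div_cancel_right₀ _ hX] at hcomp
  have := hP.continuous_deriv le_rfl
  rw [intervalIntegral.integral_eq_sub_of_hasDerivAt (fun τ _ => hderiv τ)
    (Continuous.intervalIntegrable (by fun_prop) _ _), DXP, if_neg hX, ← sub_div]
  ring_nf

theorem continuous_uncurry_DXP (hP : ContDiff ℝ 1 P) : Continuous (Function.uncurry (DXP P)) := by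
  have := hP.continuous_deriv le_rfl
  have havg : Function.uncurry (DXP P) =
      fun v : ℝ × ℝ => ∫ τ in (0 : ℝ)..1, deriv P (v.2 + v.1 * (τ - 1 / 2)) :=
    funext fun v => DXP_eq_integral hP v.1 v.2
  rw [havg]
  exact intervalIntegral.continuous_parametric_intervalIntegral_of_continuous' (by fun_prop) _ _

theorem abs_DXP_le (hP : ContDiff ℝ 1 P) (hM : ∀ k, |deriv P k| ≤ M) (X k : ℝ) :
    |DXP P X k| ≤ M := by
  rw [DXP_eq_integral hP, ← Real.norm_eq_abs]
  simpa using intervalIntegral.norm_integral_le_of_norm_le_const (a := 0) (b := 1)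
    (f := fun τ : ℝ => deriv P (k + X * (τ - 1 / 2))) fun τ _ => hM _

theorem holderWith_of_dist_le {X Y : Type*} [PseudoMetricSpace X] [PseudoMetricSpace Y]
    {f : X → Y} (h : ∀ x y, dist (f x) (f y) ≤ C * dist x y ^ (r : ℝ)) : HolderWith C r f := by
  intro x y
  rw [edist_nndist, edist_nndist, ← ENNReal.coe_rpow_of_nonneg _ r.coe_nonneg]
  exact_mod_cast h x y

theorem holderWith_DXP (hP : ContDiff ℝ 1 P) (hHolder : HolderWith C r (deriv P)) (X : ℝ) :
    HolderWith C r (DXP P X) := by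
  have := hP.continuous_deriv le_rfl
  refine holderWith_of_dist_le fun a b => ?_
  rw [dist_eq_norm, DXP_eq_integral hP, DXP_eq_integral hP, ← intervalIntegral.integral_sub
    (Continuous.intervalIntegrable (by fun_prop) _ _)
    (Continuous.intervalIntegrable (by fun_prop) _ _)]
  simpa using intervalIntegral.norm_integral_le_of_norm_le_const (a := 0) (b := 1)
    (C := C * dist a b ^ (r : ℝ))
    (f := fun τ : ℝ => deriv P (a + X * (τ - 1 / 2)) - deriv P (b + X * (τ - 1 / 2)))
    fun τ _ => by
      simpa [dist_eq_norm] using hHolder.dist_le (a + X * (τ - 1 / 2)) (b + X * (τ - 1 / 2))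

theorem DXP_eq_zero (hR : ∀ k, R < |k| → P k = 0) {X k : ℝ} (hk : R + |X| / 2 < |k|) :
    DXP P X k = 0 := by
  rcases eq_or_ne X 0 with rfl | hX
  · have hzero : P =ᶠ[𝓝 k] fun _ => 0 := by
      filter_upwards [continuous_abs.continuousAt.eventually_const_lt
        (show R < |k| by simpa using hk)] with a ha using hR a ha
    rw [DXP, if_pos rfl, hzero.deriv_eq, deriv_const]
  · have hhalf : |X / 2| = |X| / 2 := by rw [abs_div, abs_two]
    have hadd : |k| ≤ |k + X / 2| + |X / 2| := by simpa using abs_sub (k + X / 2) (X / 2)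
    have hsub : |k| ≤ |k - X / 2| + |X / 2| := by simpa using abs_add_le (k - X / 2) (X / 2)
    rw [DXP, if_neg hX, hR, hR, sub_zero, zero_div] <;> linarith

theorem hasCompactSupport_DXP (hc : HasCompactSupport P) (X : ℝ) : HasCompactSupport (DXP P X) := by
  obtain ⟨R, -, hR⟩ := hc.exists_pos_le_norm
  refine HasCompactSupport.intro (isCompact_closedBall (0 : ℝ) (R + |X| / 2)) fun k hk =>
    DXP_eq_zero (fun k hk => hR k hk.le) ?_
  simpa using hk

theorem integral_abs_DXP_le (hP : ContDiff ℝ 1 P) (hi : Integrable (deriv P)) (X : ℝ) :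
    ∫ k, |DXP P X k| ≤ ∫ k, |deriv P k| := by
  have := hP.continuous_deriv le_rfl
  have hprod : Integrable (fun v : ℝ × ℝ => deriv P (v.1 + X * (v.2 - 1 / 2)))
      (volume.prod (volume.restrict (Set.Ioc 0 1))) := by
    refine (integrable_prod_iff' (Continuous.aestronglyMeasurable (by fun_prop))).mpr
      ⟨ae_of_all _ fun τ => hi.comp_add_right (X * (τ - 1 / 2)), ?_⟩
    simp only [integral_add_right_eq_self fun k => ‖deriv P k‖, integrable_const]
  calc
    _ ≤ ∫ k, ∫ τ in Set.Ioc (0 : ℝ) 1, |deriv P (k + X * (τ - 1 / 2))| := by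
      refine integral_mono_of_nonneg (ae_of_all _ fun k => abs_nonneg _)
        hprod.norm.integral_prod_left (ae_of_all _ fun k => ?_)
      simp only [DXP_eq_integral hP, intervalIntegral.integral_of_le zero_le_one]
      exact abs_integral_le_integral_abs
    _ = ∫ τ in Set.Ioc (0 : ℝ) 1, ∫ k, |deriv P (k + X * (τ - 1 / 2))| :=
      integral_integral_swap hprod.norm
    _ = _ := by simp only [integral_add_right_eq_self fun k => |deriv P k|]; simp

theorem mul_hilbertC_DXP (hi : Integrable P) (X : ℝ) {z : ℂ} (hz : z.im ≠ 0) :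
    X * hilbertC (DXP P X) z = hilbertC P (z + X / 2) - hilbertC P (z - X / 2) := by
  rcases eq_or_ne X 0 with rfl | hX
  · simp
  have hX' : (X : ℂ) ≠ 0 := by exact_mod_cast hX
  have hadd := integrable_div_sub hi (z := z + X / 2) (by simpa using hz)
  have hsub := integrable_div_sub hi (z := z - X / 2) (by simpa using hz)
  simp only [hilbertC]
  rw [← integral_add_right_eq_self (fun t : ℝ => (P t : ℂ) / (z + X / 2 - t)) (X / 2),
    ← integral_sub_right_eq_self (fun t : ℝ => (P t : ℂ) / (z - X / 2 - t)) (X / 2), ← mul_sub,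
    ← integral_sub (hadd.comp_add_right (X / 2)) (hsub.comp_sub_right (X / 2)), mul_left_comm,
    ← integral_const_mul]
  congr 2 with t
  rw [DXP, if_neg hX]
  push_cast
  rw [add_sub_add_right_eq_sub, sub_sub_sub_cancel_right]
  field_simp

theorem exists_abs_mul_norm_hilbertC_DXP_le (hP : ContDiff ℝ 1 P) (hc : HasCompactSupport P) :
    ∃ B, ∀ (X : ℝ) (z : ℂ), z.im ≠ 0 → |X| * ‖hilbertC (DXP P X) z‖ ≤ B := by
  obtain ⟨L, hL⟩ := ContDiff.lipschitzWith_of_hasCompactSupport hc hP one_ne_zero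
  obtain ⟨B, hB⟩ := exists_norm_hilbertC_le (holderWith_one.mpr hL) one_pos hc
  refine ⟨B + B, fun X z hz => ?_⟩
  rw [← Real.norm_eq_abs, ← Complex.norm_real, ← norm_mul,
    mul_hilbertC_DXP (hP.continuous.integrable_of_hasCompactSupport hc) X hz]
  exact (norm_sub_le _ _).trans
    (add_le_add (hB _ (by simpa using hz)) (hB _ (by simpa using hz)))

theorem exists_mul_norm_hilbertC_DXP_le (hP : ContDiff ℝ 1 P) (hc : HasCompactSupport P) :
    ∃ R B, ∀ (X : ℝ) (z : ℂ), z.im ≠ 0 → (‖(X, z)‖ - R) * ‖hilbertC (DXP P X) z‖ ≤ B := by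
  obtain ⟨R, hRpos, hR⟩ := hc.exists_pos_le_norm
  obtain ⟨B, hB⟩ := exists_abs_mul_norm_hilbertC_DXP_le hP hc
  have hi : Integrable (deriv P) :=
    (hP.continuous_deriv le_rfl).integrable_of_hasCompactSupport hc.deriv
  have hradial (X : ℝ) (z : ℂ) : (‖z‖ - (R + |X| / 2)) * ‖hilbertC (DXP P X) z‖ ≤
      (1 / π) * ∫ k, |deriv P k| := by
    have hDXP : Integrable (DXP P X) := Continuous.integrable_of_hasCompactSupport
      ((continuous_uncurry_DXP hP).comp (Continuous.prodMk_right X)) (hasCompactSupport_DXP hc X)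
    refine (mul_norm_hilbertC_le hDXP (fun k => DXP_eq_zero fun k hk => hR k hk.le) z).trans ?_
    exact mul_le_mul_of_nonneg_left (integral_abs_DXP_le hP hi X) (by positivity)
  refine ⟨R, max B ((1 / π) * (∫ k, |deriv P k|) + B / 2), fun X z hz => ?_⟩
  have hX := hB X z hz
  rcases le_total ‖z‖ |X| with hle | hle
  · refine le_max_of_le_left (le_trans ?_ hX)
    rw [Prod.norm_mk, Real.norm_eq_abs, max_eq_left hle]
    gcongr
    linarith
  · refine le_max_of_le_right ?_
    rw [Prod.norm_mk, Real.norm_eq_abs, max_eq_right hle]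
    linarith [hradial X z]

end DifferenceQuotient

section Range

theorem mem_closure_image_iff_mem_range {X Y : Type*} [TopologicalSpace X] [TopologicalSpace Y]
    [T2Space Y] {f : X → Y} {D : Set X} {y c : Y} (hf : Continuous f)
    (hlim : Tendsto f (cocompact X) (𝓝 y)) (hD : Dense D) (hc : c ≠ y) :
    c ∈ closure (f '' D) ↔ c ∈ Set.range f := by
  constructor
  · intro hmem
    have hsub : f '' D ⊆ insert y (Set.range f) :=
      (Set.image_subset_range f D).trans (Set.subset_insert _ _)
    have hclosed := (hlim.isCompact_insert_range_of_cocompact hf).isClosed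
    exact (closure_minimal hsub hclosed hmem).resolve_left hc
  · rintro ⟨v, rfl⟩
    exact image_closure_subset_closure_image hf ⟨v, hD v, rfl⟩

variable {P : ℝ → ℝ} {C r : ℝ≥0}

theorem continuous_hilbertExt_DXP (hP : ContDiff ℝ 1 P) (hHolder : HolderWith C r (deriv P))
    (hr : 0 < r) (hc : HasCompactSupport P) :
    Continuous fun v : ℝ × ℂ => hilbertExt (DXP P v.1) v.2 := by
  obtain ⟨R, -, hR⟩ := hc.exists_pos_le_norm
  obtain ⟨M, hM⟩ := (hP.continuous_deriv le_rfl).bounded_above_of_compact_support hc.deriv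
  have hRc : Continuous fun X : ℝ => R + |X| / 2 := by fun_prop
  exact continuous_hilbertExt_family (continuous_uncurry_DXP hP) (holderWith_DXP hP hHolder) hr hRc
    (fun X k => DXP_eq_zero fun k hk => hR k hk.le) (abs_DXP_le hP hM)

theorem tendsto_hilbertExt_DXP_cocompact (hP : ContDiff ℝ 1 P)
    (hHolder : HolderWith C r (deriv P)) (hr : 0 < r) (hc : HasCompactSupport P) :
    Tendsto (fun v : ℝ × ℂ => hilbertExt (DXP P v.1) v.2) (cocompact (ℝ × ℂ)) (𝓝 0) := by
  obtain ⟨R, B, hB⟩ := exists_mul_norm_hilbertC_DXP_le hP hc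
  refine tendsto_cocompact_zero_of_mul_norm_le (R := R) (B := B) fun ⟨X, z⟩ => ?_
  have hX := hasCompactSupport_DXP hc X
  have hHolderX := holderWith_DXP hP hHolder X
  exact mul_norm_hilbertExt_le ((hHolderX.continuous hr).integrable_of_hasCompactSupport hX)
    (continuous_hilbertExt hHolderX hr hX) (b := fun z => ‖(X, z)‖ - R) (by fun_prop) (hB X) z

end Range

section LaplaceTransform

variable {p q X : ℝ}

theorem htilde_eq_mul_hilbertC (hp : p ≠ 0) (q : ℝ) (P : ℝ → ℝ) (hX : X ≠ 0) (z : ℂ) :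
    htilde p q P X (4 * π ^ 2 * Complex.I * p * X * z) =
      q / (4 * π * p) * hilbertC (DXP P X) z := by
  have hpC : (p : ℂ) ≠ 0 := by exact_mod_cast hp
  have hπ : (π : ℂ) ≠ 0 := by exact_mod_cast pi_ne_zero
  have hkernel (k : ℝ) : ((P (k + X / 2) - P (k - X / 2) : ℝ) : ℂ) /
      (4 * π ^ 2 * Complex.I * p * X * z - 4 * π ^ 2 * Complex.I * p * k * X) =
      1 / (4 * π ^ 2 * Complex.I * p) * ((DXP P X k : ℂ) / (z - k)) := by
    rw [DXP, if_neg hX, Complex.ofReal_div, div_div, div_mul_div_comm, one_mul]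
    congr 1
    ring
  simp_rw [htilde, hilbertC, hkernel, integral_const_mul]
  field_simp

theorem norm_one_sub_htilde (hp : p ≠ 0) (hq : q ≠ 0) (P : ℝ → ℝ) (hX : X ≠ 0) (z : ℂ) :
    ‖1 - htilde p q P X (4 * π ^ 2 * Complex.I * p * X * z)‖ =
      |q / (4 * π * p)| * ‖((4 * π * p / q : ℝ) : ℂ) - hilbertC (DXP P X) z‖ := by
  have hpC : (p : ℂ) ≠ 0 := by exact_mod_cast hp
  have hqC : (q : ℂ) ≠ 0 := by exact_mod_cast hq
  have hπ : (π : ℂ) ≠ 0 := by exact_mod_cast pi_ne_zero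
  rw [htilde_eq_mul_hilbertC hp q P hX, ← Real.norm_eq_abs, ← Complex.norm_real, ← norm_mul]
  congr 1
  push_cast
  field_simp

theorem htilde_zero (p q : ℝ) (P : ℝ → ℝ) (ω : ℂ) : htilde p q P 0 ω = 0 := by
  simp [htilde]

theorem re_four_pi_sq_mul_I_mul (p X : ℝ) (z : ℂ) :
    (4 * π ^ 2 * Complex.I * p * X * z).re = -(4 * π ^ 2 * (p * X * z.im)) := by
  rw [show 4 * π ^ 2 * Complex.I * p * X * z = (4 * π ^ 2 * (p * X) : ℝ) * (Complex.I * z) by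
    push_cast; ring, Complex.re_ofReal_mul, Complex.I_mul_re]
  ring

theorem exists_re_pos_norm_one_sub_htilde_lt_iff (hp : p ≠ 0) (hq : q ≠ 0) (P : ℝ → ℝ)
    (hX : X ≠ 0) (δ : ℝ) :
    (∃ ω : ℂ, 0 < ω.re ∧ ‖1 - htilde p q P X ω‖ < |q / (4 * π * p)| * δ) ↔
      ∃ z : ℂ, z.im ≠ 0 ∧ ‖((4 * π * p / q : ℝ) : ℂ) - hilbertC (DXP P X) z‖ < δ := by
  have hscale : 0 < |q / (4 * π * p)| := abs_pos.mpr (by positivity)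
  have hpX : p * X ≠ 0 := mul_ne_zero hp hX
  have hnorm (z : ℂ) := norm_one_sub_htilde hp hq P hX z
  constructor
  · rintro ⟨ω, hω, hlt⟩
    have hcoeff : 4 * π ^ 2 * Complex.I * p * X ≠ (0 : ℂ) := by simp [hp, hX, pi_ne_zero]
    obtain ⟨z, rfl⟩ : ∃ z, 4 * π ^ 2 * Complex.I * p * X * z = ω := ⟨_, mul_div_cancel₀ ω hcoeff⟩
    rw [hnorm, mul_lt_mul_iff_right₀ hscale] at hlt
    refine ⟨z, fun him => ?_, hlt⟩
    rw [re_four_pi_sq_mul_I_mul, him, mul_zero, mul_zero, neg_zero] at hω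
    exact hω.false
  · rintro ⟨z, him, hlt⟩
    obtain ⟨w, hneg, hw⟩ : ∃ w : ℂ, p * X * w.im < 0 ∧
        ‖((4 * π * p / q : ℝ) : ℂ) - hilbertC (DXP P X) w‖ < δ := by
      rcases lt_or_gt_of_ne (mul_ne_zero hpX him) with hneg | hpos
      · exact ⟨z, hneg, hlt⟩
      · refine ⟨conj z, by simpa using hpos, ?_⟩
        rwa [hilbertC_conj, ← Complex.conj_ofReal, ← map_sub, Complex.norm_conj]
    refine ⟨4 * π ^ 2 * Complex.I * p * X * w, ?_, ?_⟩
    · rw [re_four_pi_sq_mul_I_mul, neg_pos]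
      exact mul_neg_of_pos_of_neg (by positivity) hneg
    · rw [hnorm]
      gcongr

theorem forall_exists_norm_one_sub_htilde_lt_iff (hp : p ≠ 0) (hq : q ≠ 0) (P : ℝ → ℝ) :
    (∀ ε : ℝ, 0 < ε → ∃ (X : ℝ) (ω : ℂ), 0 < ω.re ∧ ‖1 - htilde p q P X ω‖ < ε) ↔
      ∀ δ : ℝ, 0 < δ → ∃ X : ℝ, X ≠ 0 ∧ ∃ z : ℂ, z.im ≠ 0 ∧
        ‖((4 * π * p / q : ℝ) : ℂ) - hilbertC (DXP P X) z‖ < δ := by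
  have hscale : 0 < |q / (4 * π * p)| := abs_pos.mpr (by positivity)
  constructor
  · intro h δ hδ
    obtain ⟨X, ω, hω, hlt⟩ := h (min 1 (|q / (4 * π * p)| * δ)) (by positivity)
    obtain ⟨hlt_one, hlt⟩ := lt_min_iff.mp hlt
    have hX : X ≠ 0 := by
      rintro rfl
      simp [htilde_zero] at hlt_one
    exact ⟨X, hX, (exists_re_pos_norm_one_sub_htilde_lt_iff hp hq P hX δ).mp ⟨ω, hω, hlt⟩⟩
  · intro h ε hε
    obtain ⟨X, hX, hz⟩ := h (ε / |q / (4 * π * p)|) (by positivity)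
    refine ⟨X, ?_⟩
    simpa only [mul_div_cancel₀ ε hscale.ne'] using
      (exists_re_pos_norm_one_sub_htilde_lt_iff hp hq P hX _).mpr hz

end LaplaceTransform

section Stability

variable {p q : ℝ} {P : ℝ → ℝ} {C r : ℝ≥0}

theorem forall_exists_norm_one_sub_htilde_lt_iff_mem_closure (hp : p ≠ 0) (hq : q ≠ 0)
    (hi : ∀ X, Integrable (DXP P X)) :
    (∀ ε : ℝ, 0 < ε → ∃ (X : ℝ) (ω : ℂ), 0 < ω.re ∧ ‖1 - htilde p q P X ω‖ < ε) ↔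
      ((4 * π * p / q : ℝ) : ℂ) ∈ closure
        ((fun v : ℝ × ℂ => hilbertExt (DXP P v.1) v.2) '' {0}ᶜ ×ˢ {z : ℂ | z.im ≠ 0}) := by
  rw [forall_exists_norm_one_sub_htilde_lt_iff hp hq, Metric.mem_closure_iff]
  refine forall₂_congr fun δ _ => ⟨?_, ?_⟩
  · rintro ⟨X, hX, z, hz, hlt⟩
    refine ⟨_, ⟨(X, z), ⟨hX, hz⟩, rfl⟩, ?_⟩
    rwa [dist_eq_norm, norm_ofReal_sub_hilbertExt (hi X) hz]
  · rintro ⟨_, ⟨⟨X, z⟩, ⟨hX, hz⟩, rfl⟩, hlt⟩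
    refine ⟨X, hX, z, hz, ?_⟩
    rwa [dist_eq_norm, norm_ofReal_sub_hilbertExt (hi X) hz] at hlt

theorem stmt_17_general (hp : p ≠ 0) (hq : q ≠ 0) (hP : ContDiff ℝ 1 P)
    (hHolder : HolderWith C r (deriv P)) (hr : 0 < r) (hc : HasCompactSupport P) :
    (∀ ε : ℝ, 0 < ε → ∃ (X : ℝ) (ω : ℂ), 0 < ω.re ∧ ‖1 - htilde p q P X ω‖ < ε) ↔
      ((∃ (Xs : ℝ) (Ωs : ℂ), Ωs.im ≠ 0 ∧
          hilbertC (DXP P Xs) Ωs = ((4 * π * p / q : ℝ) : ℂ) ∧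
          hilbertC (DXP P Xs) (conj Ωs) = ((4 * π * p / q : ℝ) : ℂ)) ∨
        (∃ Xs Ωs : ℝ, hilbertR (DXP P Xs) Ωs = 4 * π * p / q ∧ DXP P Xs Ωs = 0)) := by
  obtain ⟨R, -, hR⟩ := hc.exists_pos_le_norm
  have hsupp (X k : ℝ) : R + |X| / 2 < |k| → DXP P X k = 0 :=
    DXP_eq_zero fun k hk => hR k hk.le
  have hHolderX (X : ℝ) := holderWith_DXP hP hHolder X
  have hi (X : ℝ) : Integrable (DXP P X) :=
    ((hHolderX X).continuous hr).integrable_of_hasCompactSupport (hasCompactSupport_DXP hc X)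
  have hne : ((4 * π * p / q : ℝ) : ℂ) ≠ 0 := Complex.ofReal_ne_zero.mpr (by positivity)
  have hdense : Dense (({0}ᶜ : Set ℝ) ×ˢ {z : ℂ | z.im ≠ 0}) :=
    (dense_compl_singleton 0).prod dense_setOf_im_ne_zero
  rw [forall_exists_norm_one_sub_htilde_lt_iff_mem_closure hp hq hi,
    mem_closure_image_iff_mem_range (continuous_hilbertExt_DXP hP hHolder hr hc)
      (tendsto_hilbertExt_DXP_cocompact hP hHolder hr hc) hdense hne,
    Set.mem_range, Prod.exists, ← exists_or]
  exact exists_congr fun X =>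
    exists_hilbertExt_eq_ofReal_iff (hi X) (hHolderX X) hr (hsupp X) (4 * π * p / q)

end Stability

/-- Equivalent formulations of failure of the stability condition:
`inf_{X, Re ω > 0} |1 − h̃(X,ω)| = 0` iff either there are `X* ∈ ℝ`, `Ω* ∈ ℂ∖ℝ` with
`H[D_{X*}P](Ω*) = H[D_{X*}P](conj Ω*) = 4πp/q`, or there are real `X*, Ω*` with
`H[D_{X*}P](Ω*) = 4πp/q` and `D_{X*}P(Ω*) = 0`. -/
theorem stmt_17 (p q : ℝ) (hp : p ≠ 0) (hq : q ≠ 0)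
    (P : SchwartzMap ℝ ℝ) (hPc : HasCompactSupport ⇑P) :
    (∀ ε : ℝ, 0 < ε → ∃ (X : ℝ) (ω : ℂ), 0 < ω.re ∧ ‖1 - htilde p q (⇑P) X ω‖ < ε) ↔
      ((∃ (Xs : ℝ) (Ωs : ℂ), Ωs.im ≠ 0 ∧
          hilbertC (DXP (⇑P) Xs) Ωs = ((4 * π * p / q : ℝ) : ℂ) ∧
          hilbertC (DXP (⇑P) Xs) (starRingEnd ℂ Ωs) = ((4 * π * p / q : ℝ) : ℂ)) ∨
        (∃ Xs Ωs : ℝ,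
          hilbertR (DXP (⇑P) Xs) Ωs = 4 * π * p / q ∧ DXP (⇑P) Xs Ωs = 0)) := by
  have hderiv : ContDiff ℝ 1 (deriv P) := (P.smooth 2).deriv' (n := 1)
  obtain ⟨C, hC⟩ := ContDiff.lipschitzWith_of_hasCompactSupport hPc.deriv hderiv one_ne_zero
  exact stmt_17_general hp hq (P.smooth 1) (holderWith_one.mpr hC) one_pos hPc

end
end

section
/- Let P ∈ S(ℝ) be compactly supported and let p ≠ 0 and q ≠ 0 be real. Define h̃(X,ω) = q i ∫_ℝ ( P(k + X/2) − P(k − X/2) ) / ( ω − 4π² i p k X ) dk for X ∈ ℝ, Re ω > 0. Suppose that for every X ∈ ℝ and every t* ∈ ℝ with D_X P(t*) = 0 one has H[D_X P](t*) < 4πp/q. Then P is stable: there exists κ > 0 such that |1 − h̃(X,ω)| ≥ κ for all X ∈ ℝ and all ω with Re ω > 0. -/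
open MeasureTheory Real Filter

noncomputable section

/-!
The values of `h̃` are, up to the factor `q / (4π²p)`, those of the Cauchy transforms
`C_X(z) = ∫ D_X P(k)/(z-k) dk` off the real axis. On the Fourier side `C_X` is a Laplace transform
of an integrable function, so it extends continuously to the closed upper half-plane, where it
vanishes at infinity and has boundary values `π (H[D_X P] - i D_X P)`. If `C_X` attained the level
`c = 4π²p/q`, then among the points where `C_X` is real and at least `c` there would be one
maximizing `C_X`; by hypothesis it is not on the boundary, and in the interior this contradicts the
open mapping theorem. The distance to `c` is bounded below uniformly because `(X, z) ↦ C_X(z)` is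
jointly continuous and vanishes at infinity: `C_X` is the average of `C_0` over a segment of length
`X`, and also the difference quotient of the bounded Cauchy transform of `P`.
-/

open scoped Topology FourierTransform SchwartzMap

section FourierLaplace

/-- The half-line Fourier–Laplace transform `∫_0^∞ e^{2πizξ} g(ξ) dξ`. For `g ∈ L¹` it makes sense
on the closed upper half-plane, which is what gives boundary values. -/
def fourierLaplace (g : ℝ → ℂ) (z : ℂ) : ℂ :=
  ∫ ξ in Set.Ioi (0 : ℝ), Complex.exp (2 * π * Complex.I * z * ξ) * g ξ

variable {g g' : ℝ → ℂ} {z : ℂ}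

lemma norm_exp_two_pi_I_mul (z : ℂ) (ξ : ℝ) :
    ‖Complex.exp (2 * π * Complex.I * z * ξ)‖ = Real.exp (-(2 * π * z.im * ξ)) := by
  rw [Complex.norm_exp]
  simp

lemma norm_exp_two_pi_I_mul_le_one (hz : 0 ≤ z.im) {ξ : ℝ} (hξ : 0 < ξ) :
    ‖Complex.exp (2 * π * Complex.I * z * ξ)‖ ≤ 1 := by
  rw [norm_exp_two_pi_I_mul, Real.exp_le_one_iff, neg_nonpos]
  positivity

lemma integrableOn_exp_mul (hg : IntegrableOn g (Set.Ioi 0)) (hz : 0 ≤ z.im) :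
    IntegrableOn (fun ξ : ℝ => Complex.exp (2 * π * Complex.I * z * ξ) * g ξ) (Set.Ioi 0) := by
  refine Integrable.mono hg (Continuous.aestronglyMeasurable (by fun_prop) |>.mul hg.1) ?_
  filter_upwards [ae_restrict_mem measurableSet_Ioi] with ξ hξ
  rw [norm_mul]
  exact mul_le_of_le_one_left (norm_nonneg _) (norm_exp_two_pi_I_mul_le_one hz hξ)

lemma norm_fourierLaplace_le (hg : IntegrableOn g (Set.Ioi 0)) (hz : 0 ≤ z.im) :
    ‖fourierLaplace g z‖ ≤ ∫ ξ in Set.Ioi (0 : ℝ), ‖g ξ‖ := by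
  refine norm_integral_le_of_norm_le hg.norm ?_
  filter_upwards [ae_restrict_mem measurableSet_Ioi] with ξ hξ
  rw [norm_mul]
  exact mul_le_of_le_one_left (norm_nonneg _) (norm_exp_two_pi_I_mul_le_one hz hξ)

lemma hasDerivAt_exp_two_pi_I_mul (z : ℂ) (ξ : ℝ) :
    HasDerivAt (fun w : ℂ => Complex.exp (2 * π * Complex.I * w * ξ))
      (2 * π * Complex.I * ξ * Complex.exp (2 * π * Complex.I * z * ξ)) z := by
  have h := (((hasDerivAt_id' z).const_mul (2 * π * Complex.I)).mul_const (ξ : ℂ)).cexp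
  simpa [mul_comm] using h

lemma norm_slope_exp_two_pi_I_mul_le {w : ℂ} (hz : 0 ≤ z.im) (hw : 0 ≤ w.im) {ξ : ℝ}
    (hξ : 0 < ξ) :
    ‖slope (fun w : ℂ => Complex.exp (2 * π * Complex.I * w * ξ)) z w‖
      ≤ ‖2 * π * Complex.I * ξ‖ := by
  rcases eq_or_ne w z with rfl | hwz
  · simp only [slope_same, norm_zero, norm_nonneg]
  rw [slope_def_field, norm_div, div_le_iff₀ (norm_pos_iff.2 (sub_ne_zero.2 hwz))]
  refine Convex.norm_image_sub_le_of_norm_hasDerivWithin_le (s := {z : ℂ | 0 ≤ z.im})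
    (fun v _ => (hasDerivAt_exp_two_pi_I_mul v ξ).hasDerivWithinAt) (fun v hv => ?_)
    (convex_halfSpace_im_ge 0) hz hw
  rw [norm_mul]
  exact mul_le_of_le_one_right (norm_nonneg _) (norm_exp_two_pi_I_mul_le_one hv hξ)

lemma hasDerivWithinAt_fourierLaplace (hg : IntegrableOn g (Set.Ioi 0))
    (hξg : IntegrableOn (fun ξ : ℝ => 2 * π * Complex.I * ξ * g ξ) (Set.Ioi 0)) (hz : 0 ≤ z.im) :
    HasDerivWithinAt (fourierLaplace g)
      (fourierLaplace (fun ξ => 2 * π * Complex.I * ξ * g ξ) z) {w : ℂ | 0 ≤ w.im} z := by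
  set S : Set ℂ := {w : ℂ | 0 ≤ w.im}
  set e : ℝ → ℂ → ℂ := fun ξ w => Complex.exp (2 * π * Complex.I * w * ξ) with he
  have hslope : Tendsto (fun w => ∫ ξ in Set.Ioi (0 : ℝ), slope (e ξ) z w * g ξ) (𝓝[S \ {z}] z)
      (𝓝 (fourierLaplace (fun ξ => 2 * π * Complex.I * ξ * g ξ) z)) := by
    refine tendsto_integral_filter_of_dominated_convergence
      (fun ξ => ‖2 * π * Complex.I * ξ * g ξ‖) (Eventually.of_forall fun w => ?_) ?_ hξg.norm ?_
    · refine Continuous.aestronglyMeasurable ?_ |>.mul hg.1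
      simp only [he, slope_def_field]
      fun_prop
    · filter_upwards [self_mem_nhdsWithin] with w hw
      filter_upwards [ae_restrict_mem measurableSet_Ioi] with ξ hξ
      rw [norm_mul, norm_mul _ (g ξ)]
      gcongr
      exact norm_slope_exp_two_pi_I_mul_le hz hw.1 hξ
    · refine Eventually.of_forall fun ξ => ?_
      have h := (hasDerivAt_exp_two_pi_I_mul z ξ).hasDerivWithinAt (s := S)
      convert (hasDerivWithinAt_iff_tendsto_slope.1 h).mul_const (g ξ) using 2
      ring
  refine hasDerivWithinAt_iff_tendsto_slope.2 (hslope.congr' ?_)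
  filter_upwards [self_mem_nhdsWithin] with w hw
  rw [slope_def_field, fourierLaplace, fourierLaplace, ← integral_sub
    (integrableOn_exp_mul hg hw.1) (integrableOn_exp_mul hg hz), ← integral_div]
  refine integral_congr_ae (Eventually.of_forall fun ξ => ?_)
  simp only [slope_def_field, he]
  ring

lemma fourierLaplace_deriv (hg : IntegrableOn g (Set.Ioi 0)) (hg' : IntegrableOn g' (Set.Ioi 0))
    (hd : ∀ ξ, HasDerivAt g (g' ξ) ξ) (hz : 0 ≤ z.im) :
    fourierLaplace g' z = -g 0 - 2 * π * Complex.I * z * fourierLaplace g z := by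
  have hderiv : ∀ ξ : ℝ, HasDerivAt (fun ξ : ℝ => Complex.exp (2 * π * Complex.I * z * ξ) * g ξ)
      (2 * π * Complex.I * z * (Complex.exp (2 * π * Complex.I * z * ξ) * g ξ)
        + Complex.exp (2 * π * Complex.I * z * ξ) * g' ξ) ξ := fun ξ => by
    have he := ((hasDerivAt_id' ξ).ofReal_comp.const_mul (2 * π * Complex.I * z)).cexp
    refine (he.fun_mul (hd ξ)).congr_deriv ?_
    push_cast
    ring
  have hint := ((integrableOn_exp_mul hg hz).const_mul (2 * π * Complex.I * z))
  have htop := tendsto_zero_of_hasDerivAt_of_integrableOn_Ioi (fun ξ _ => hderiv ξ)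
    (hint.add (integrableOn_exp_mul hg' hz)) (integrableOn_exp_mul hg hz)
  have h := integral_Ioi_of_hasDerivAt_of_tendsto' (fun ξ _ => hderiv ξ)
    (hint.add (integrableOn_exp_mul hg' hz)) htop
  rw [integral_add hint (integrableOn_exp_mul hg' hz), integral_const_mul] at h
  simp only [Complex.ofReal_zero, mul_zero, Complex.exp_zero, one_mul, zero_sub] at h
  rw [fourierLaplace, fourierLaplace]
  linear_combination h

lemma tendsto_fourierLaplace_cocompact (hg : IntegrableOn g (Set.Ioi 0))
    (hg' : IntegrableOn g' (Set.Ioi 0)) (hd : ∀ ξ, HasDerivAt g (g' ξ) ξ) :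
    Tendsto (fourierLaplace g) (cocompact ℂ ⊓ 𝓟 {z | 0 ≤ z.im}) (𝓝 0) := by
  set C := ‖g 0‖ + ∫ ξ in Set.Ioi (0 : ℝ), ‖g' ξ‖
  have hC : ∀ z : ℂ, 0 ≤ z.im → ‖2 * π * Complex.I * z * fourierLaplace g z‖ ≤ C := fun z hz => by
    have h := fourierLaplace_deriv hg hg' hd hz
    rw [show 2 * π * Complex.I * z * fourierLaplace g z = -g 0 - fourierLaplace g' z by
      linear_combination h]
    refine (norm_sub_le _ _).trans ?_
    rw [norm_neg]
    exact add_le_add le_rfl (norm_fourierLaplace_le hg' hz)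
  have hlim : Tendsto (fun z : ℂ => C / (2 * π * ‖z‖)) (cocompact ℂ) (𝓝 0) :=
    ((tendsto_norm_cocompact_atTop (E := ℂ)).const_mul_atTop Real.two_pi_pos).const_div_atTop C
  refine squeeze_zero_norm' ?_ (hlim.mono_left inf_le_left)
  rw [eventually_inf_principal]
  filter_upwards [(tendsto_norm_cocompact_atTop (E := ℂ)).eventually_gt_atTop 0] with z hz0 hz
  have h := hC z hz
  rw [norm_mul] at h
  rw [le_div_iff₀' (by positivity)]
  simpa [abs_of_pos Real.pi_pos] using h

end FourierLaplace

section SingularIntegral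

variable {E : Type*} [NormedAddCommGroup E] [NormedSpace ℝ E] {f : ℝ → E} {x : ℝ}

lemma integrableOn_inv_smul_sub_comp_add (hf : Integrable f) (hd : DifferentiableAt ℝ f x) :
    IntegrableOn (fun s : ℝ => s⁻¹ • (f (x - s) - f (x + s))) (Set.Ioi 0) := by
  have hint : Integrable fun s => f (x - s) - f (x + s) :=
    (hf.comp_sub_left x).sub (hf.comp_add_left x)
  have hmeas : AEStronglyMeasurable (fun s : ℝ => s⁻¹ • (f (x - s) - f (x + s))) :=
    measurable_inv.aestronglyMeasurable.smul hint.1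
  have hO : (fun s : ℝ => f (x - s) - f (x + s)) =O[𝓝 0] fun s : ℝ => s := by
    have hsub : DifferentiableAt ℝ (fun s : ℝ => f (x - s) - f (x + s)) 0 :=
      (DifferentiableAt.comp _ (by simpa using hd) (by fun_prop)).sub
        (DifferentiableAt.comp _ (by simpa using hd) (by fun_prop))
    simpa using hsub.isBigO_sub
  obtain ⟨C, hC⟩ := hO.bound
  obtain ⟨δ, hδ, hδC⟩ := Metric.eventually_nhds_iff.1 hC
  rw [← Set.Ioo_union_Ici_eq_Ioi hδ]
  refine IntegrableOn.union ?_ ?_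
  · refine Measure.integrableOn_of_bounded (M := C) measure_Ioo_lt_top.ne hmeas ?_
    filter_upwards [ae_restrict_mem measurableSet_Ioo] with s hs
    have h := hδC (y := s) (by rw [Real.dist_0_eq_abs, abs_of_pos hs.1]; exact hs.2)
    rwa [norm_smul, norm_inv, inv_mul_le_iff₀' (norm_pos_iff.2 hs.1.ne')]
  · refine Integrable.mono' (hint.norm.const_mul δ⁻¹).integrableOn hmeas.restrict ?_
    filter_upwards [ae_restrict_mem measurableSet_Ici] with s hs
    rw [norm_smul, norm_inv, Real.norm_of_nonneg (hδ.le.trans hs)]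
    gcongr
    exact hs

lemma integral_odd_smul {K : ℝ → ℝ} (hodd : ∀ s, K (-s) = -K s)
    (hint : Integrable fun s => K s • f (x - s)) :
    ∫ s, K s • f (x - s) = ∫ s in Set.Ioi 0, K s • (f (x - s) - f (x + s)) := by
  have hneg : ∫ s in Set.Iic 0, K s • f (x - s) = -∫ s in Set.Ioi 0, K s • f (x + s) := by
    rw [← neg_zero, ← integral_comp_neg_Ioi, neg_zero, ← integral_neg]
    simp only [hodd, sub_neg_eq_add, neg_smul]
  have hint' : Integrable fun s => K s • f (x + s) := by
    have h := hint.comp_neg.neg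
    simpa [hodd, Pi.neg_def] using h
  rw [← intervalIntegral.integral_Iic_add_Ioi hint.integrableOn hint.integrableOn, hneg]
  simp only [smul_sub]
  rw [integral_sub hint.integrableOn hint'.integrableOn]
  abel

lemma tendsto_integral_odd_kernel {ι : Type*} {l : Filter ι} [l.IsCountablyGenerated]
    {K : ι → ℝ → ℝ} (hodd : ∀ i s, K i (-s) = -K i s) (hmeas : ∀ i, Measurable (K i))
    (hbdd : ∀ᶠ i in l, ∃ C, ∀ s, |K i s| ≤ C) (hle : ∀ i, ∀ s > 0, |K i s| ≤ s⁻¹)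
    (hlim : ∀ s > 0, Tendsto (K · s) l (𝓝 s⁻¹)) (hf : Integrable f)
    (hd : DifferentiableAt ℝ f x) :
    Tendsto (fun i => ∫ s, K i s • f (x - s)) l
      (𝓝 (∫ s in Set.Ioi (0 : ℝ), s⁻¹ • (f (x - s) - f (x + s)))) := by
  have hint : Integrable fun s => f (x - s) - f (x + s) :=
    (hf.comp_sub_left x).sub (hf.comp_add_left x)
  have hhalf : Tendsto (fun i => ∫ s in Set.Ioi 0, K i s • (f (x - s) - f (x + s))) l
      (𝓝 (∫ s in Set.Ioi (0 : ℝ), s⁻¹ • (f (x - s) - f (x + s)))) := by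
    refine tendsto_integral_filter_of_dominated_convergence
      (fun s => ‖s⁻¹ • (f (x - s) - f (x + s))‖)
      (Eventually.of_forall fun i => ((hmeas i).aestronglyMeasurable.smul hint.1).restrict)
      (Eventually.of_forall fun i => ?_) (integrableOn_inv_smul_sub_comp_add hf hd).norm ?_
    · filter_upwards [ae_restrict_mem measurableSet_Ioi] with s hs
      rw [norm_smul, norm_smul, Real.norm_of_nonneg (inv_nonneg.2 (le_of_lt hs))]
      gcongr
      exact hle i s hs
    · filter_upwards [ae_restrict_mem measurableSet_Ioi] with s hs
      exact (hlim s hs).smul_const _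
  refine hhalf.congr' ?_
  filter_upwards [hbdd] with i ⟨C, hC⟩
  exact (integral_odd_smul (hodd i) <| (hf.comp_sub_left x).bdd_smul C
    (hmeas i).aestronglyMeasurable (Eventually.of_forall hC)).symm

lemma hilbertR_eq {f : ℝ → ℝ} (hf : Integrable f) (hd : DifferentiableAt ℝ f x) :
    hilbertR f x = π⁻¹ * ∫ s in Set.Ioi (0 : ℝ), s⁻¹ * (f (x - s) - f (x + s)) := by
  have hset : ∀ ε y : ℝ, MeasurableSet {s : ℝ | ε < |y - s|} := fun ε y =>
    measurableSet_lt measurable_const (by fun_prop)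
  have h := tendsto_integral_odd_kernel (l := 𝓝[>] (0 : ℝ))
    (K := fun ε s => if ε < |s| then s⁻¹ else 0)
    (fun ε s => by split_ifs <;> simp_all)
    (fun ε => .ite (by simpa using hset ε 0) measurable_inv measurable_const) ?_
    (fun ε s hs => ?_) (fun s hs => ?_) hf hd
  · refine Tendsto.limUnder_eq ((h.const_mul π⁻¹).congr fun ε => ?_)
    rw [one_div, ← integral_indicator (hset ε x), ← integral_sub_left_eq_self _ _ x]
    congr 2
    ext s
    by_cases hs : ε < |x - s| <;> simp [hs, div_eq_inv_mul]
  · filter_upwards [self_mem_nhdsWithin] with ε (hε : 0 < ε)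
    refine ⟨ε⁻¹, fun s => ?_⟩
    split_ifs with hs
    · rw [abs_inv]
      gcongr
    · simpa using hε.le
  · split_ifs
    · rw [abs_inv, abs_of_pos hs]
    · simpa using hs.le
  · refine tendsto_const_nhds.congr' ?_
    filter_upwards [mem_nhdsWithin_of_mem_nhds (eventually_lt_nhds hs)] with ε hε
    rw [if_pos (hε.trans_le (le_abs_self s))]

lemma tendsto_integral_poisson [CompleteSpace E] (hf : Integrable f) (hc : ContinuousAt f x) :
    Tendsto (fun ε : ℝ => ∫ s, (ε / (s ^ 2 + ε ^ 2)) • f (x - s)) (𝓝[>] 0) (𝓝 (π • f x)) := by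
  have hdecay : Tendsto (fun u : ℝ => ‖u‖ ^ Module.finrank ℝ ℝ * (π⁻¹ * (1 + u ^ 2)⁻¹))
      (Bornology.cobounded ℝ) (𝓝 0) := by
    have h : Tendsto (fun u : ℝ => π⁻¹ * ‖u‖⁻¹) (Bornology.cobounded ℝ) (𝓝 0) := by
      simpa using (tendsto_norm_cobounded_atTop (E := ℝ)).inv_tendsto_atTop.const_mul π⁻¹
    refine squeeze_zero (fun u => by positivity) (fun u => ?_) h
    rw [Module.finrank_self, pow_one, Real.norm_eq_abs, ← sq_abs u]
    rcases eq_or_ne u 0 with rfl | hu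
    · simp
    have hu' := abs_pos.2 hu
    field_simp
    linarith
  have hmass : ∫ u : ℝ, π⁻¹ * (1 + u ^ 2)⁻¹ = 1 := by
    rw [integral_const_mul, integral_univ_inv_one_add_sq, inv_mul_cancel₀ pi_ne_zero]
  have h := ((tendsto_integral_comp_smul_smul_of_integrable (μ := volume)
    (fun u => by positivity) hmass hdecay (hf.comp_sub_left x)
    (ContinuousAt.comp (g := f) (by simpa using hc) (by fun_prop))).comp
      tendsto_inv_nhdsGT_zero).const_smul π
  simp only [sub_zero] at h
  refine h.congr' ?_
  filter_upwards [self_mem_nhdsWithin] with ε (hε : 0 < ε)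
  simp only [Function.comp_apply, Module.finrank_self, pow_one, smul_eq_mul]
  rw [← integral_smul]
  congr with s
  rw [smul_smul]
  congr 1
  field_simp
  ring

lemma abs_div_sq_add_sq_le {ε : ℝ} (hε : 0 < ε) (s : ℝ) : |s / (s ^ 2 + ε ^ 2)| ≤ ε⁻¹ := by
  rw [abs_div, abs_of_pos (by positivity : 0 < s ^ 2 + ε ^ 2), div_le_iff₀ (by positivity),
    inv_mul_eq_div, le_div_iff₀ hε]
  nlinarith [sq_nonneg (|s| - ε), sq_abs s, abs_nonneg s]

lemma integral_div_add_mul_I_sub {f : ℝ → ℂ} (hf : Integrable f) (x : ℝ) {ε : ℝ} (hε : 0 < ε) :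
    ∫ k : ℝ, f k / (x + ε * Complex.I - k)
      = (∫ s, (s / (s ^ 2 + ε ^ 2)) • f (x - s))
        - (∫ s, (ε / (s ^ 2 + ε ^ 2)) • f (x - s)) * Complex.I := by
  have hodd : Integrable fun s => (s / (s ^ 2 + ε ^ 2)) • f (x - s) :=
    (hf.comp_sub_left x).bdd_smul (φ := fun s => s / (s ^ 2 + ε ^ 2)) ε⁻¹
      (Measurable.aestronglyMeasurable (by fun_prop))
      (Eventually.of_forall (abs_div_sq_add_sq_le hε))
  have heven : Integrable fun s => (ε / (s ^ 2 + ε ^ 2)) • f (x - s) := by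
    refine (hf.comp_sub_left x).bdd_smul (φ := fun s => ε / (s ^ 2 + ε ^ 2)) ε⁻¹
      (Measurable.aestronglyMeasurable (by fun_prop)) (Eventually.of_forall fun s => ?_)
    rw [Real.norm_of_nonneg (by positivity), div_le_iff₀ (by positivity), mul_add, sq ε,
      inv_mul_cancel_left₀ hε.ne']
    exact le_add_of_nonneg_left (by positivity)
  rw [← integral_mul_const, ← integral_sub hodd (heven.mul_const _),
    ← integral_sub_left_eq_self _ _ x]
  congr with s
  have hs : (s ^ 2 + ε ^ 2 : ℂ) ≠ 0 := by exact_mod_cast (by positivity : s ^ 2 + ε ^ 2 ≠ 0)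
  have hs' : (s + ε * Complex.I : ℂ) ≠ 0 := fun h => hε.ne' (by simpa using congrArg Complex.im h)
  rw [Complex.real_smul, Complex.real_smul]
  push_cast
  rw [show (x + ε * Complex.I - (x - s) : ℂ) = s + ε * Complex.I by ring, div_eq_iff hs']
  field_simp
  linear_combination (f (x - s) * ε ^ 2) * Complex.I_sq

/-- The Sokhotski–Plemelj formula. -/
lemma tendsto_integral_div_add_mul_I_sub {f : ℝ → ℂ} (hf : Integrable f)
    (hd : DifferentiableAt ℝ f x) :
    Tendsto (fun ε : ℝ => ∫ k : ℝ, f k / (x + ε * Complex.I - k)) (𝓝[>] 0)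
      (𝓝 ((∫ s in Set.Ioi (0 : ℝ), s⁻¹ • (f (x - s) - f (x + s))) - π • f x * Complex.I)) := by
  have hodd := tendsto_integral_odd_kernel (l := 𝓝[>] (0 : ℝ))
    (K := fun ε s => s / (s ^ 2 + ε ^ 2)) (fun ε s => by simp [neg_div])
    (fun ε => by fun_prop) ?_ (fun ε s hs => ?_) (fun s hs => ?_) hf hd
  · refine (hodd.sub ((tendsto_integral_poisson hf hd.continuousAt).mul_const _)).congr' ?_
    filter_upwards [self_mem_nhdsWithin] with ε hε
    exact (integral_div_add_mul_I_sub hf x hε).symm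
  · filter_upwards [self_mem_nhdsWithin] with ε hε using ⟨ε⁻¹, abs_div_sq_add_sq_le hε⟩
  · rw [abs_of_pos (by positivity), div_le_iff₀ (by positivity), mul_add, sq s,
      inv_mul_cancel_left₀ hs.ne']
    exact le_add_of_nonneg_right (by positivity)
  · have h : ContinuousAt (fun ε : ℝ => s / (s ^ 2 + ε ^ 2)) 0 := by
      fun_prop (disch := positivity)
    simpa [sq, div_mul_cancel_left₀ hs.ne'] using h.tendsto.mono_left nhdsWithin_le_nhds

end SingularIntegral

section CauchyExtension

/-- The Cauchy transform `∫ f(k)/(z-k) dk` of `f`, extended to the closed upper half-plane. On the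
Fourier side `1/(z-k)` is `-2πi ∫_0^∞ e^{2πi(z-k)ξ} dξ`. -/
def cauchyExt (f : ℝ → ℂ) (z : ℂ) : ℂ :=
  -(2 * π * Complex.I) * fourierLaplace (𝓕 f) z

variable {z : ℂ}

lemma integral_exp_two_pi_I_mul_Ioi (hz : 0 < z.im) :
    ∫ ξ in Set.Ioi (0 : ℝ), Complex.exp (2 * π * Complex.I * z * ξ)
      = -(2 * π * Complex.I * z)⁻¹ := by
  rw [integral_exp_mul_complex_Ioi (by simpa using by positivity)]
  simp [neg_div]

lemma cauchyExt_eq_integral_div {f : ℝ → ℂ} (hf : Integrable f) (hz : 0 < z.im) :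
    cauchyExt f z = ∫ k : ℝ, f k / (z - k) := by
  have hexp : IntegrableOn (fun ξ : ℝ => Complex.exp (2 * π * Complex.I * z * ξ)) (Set.Ioi 0) :=
    integrableOn_exp_mul_complex_Ioi (by simpa using by positivity) 0
  have hprod : Integrable (Function.uncurry fun (ξ k : ℝ) =>
      Complex.exp (2 * π * Complex.I * (z - k) * ξ) * f k)
      ((volume.restrict (Set.Ioi 0)).prod volume) := by
    have h := (hexp.mul_prod hf).bdd_mul (c := 1)
      (f := fun q => Complex.exp ((-2 * π * q.2 * q.1 : ℝ) * Complex.I))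
      (Continuous.aestronglyMeasurable (by fun_prop))
      (Eventually.of_forall fun q => (Complex.norm_exp_ofReal_mul_I _).le)
    refine h.congr (Eventually.of_forall fun q => ?_)
    simp only [Function.uncurry, ← mul_assoc, ← Complex.exp_add]
    push_cast
    ring_nf
  calc cauchyExt f z
      = -(2 * π * Complex.I) * ∫ ξ in Set.Ioi (0 : ℝ), ∫ k : ℝ,
          Complex.exp (2 * π * Complex.I * (z - k) * ξ) * f k := by
        rw [cauchyExt, fourierLaplace]
        congr 2 with ξ
        rw [Real.fourier_real_eq_integral_exp_smul, ← integral_const_mul]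
        congr with k
        rw [smul_eq_mul, ← mul_assoc, ← Complex.exp_add]
        push_cast
        ring_nf
    _ = ∫ k : ℝ, f k / (z - k) := by
        rw [integral_integral_swap hprod, ← integral_const_mul]
        congr with k
        rw [integral_mul_const, integral_exp_two_pi_I_mul_Ioi (by simpa using hz)]
        have hpi : (2 * π * Complex.I : ℂ) ≠ 0 := by simp [pi_ne_zero]
        rw [mul_inv, div_eq_mul_inv]
        linear_combination (f k * (z - k)⁻¹) * mul_inv_cancel₀ hpi

lemma fourier_comp_add_right (f : ℝ → ℂ) (a ξ : ℝ) :
    𝓕 (fun k => f (k + a)) ξ = 𝐞 (a * ξ) • 𝓕 f ξ := by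
  rw [mul_comm]
  exact congrFun (VectorFourier.fourierIntegral_comp_add_right 𝐞 volume (innerₗ ℝ) f a) ξ

lemma cauchyExt_comp_add_right (f : ℝ → ℂ) (a : ℝ) (z : ℂ) :
    cauchyExt (fun k => f (k + a)) z = cauchyExt f (z + a) := by
  simp only [cauchyExt, fourierLaplace, fourier_comp_add_right, Circle.smul_def, smul_eq_mul,
    Real.fourierChar_apply, ← mul_assoc, ← Complex.exp_add]
  push_cast
  congr with ξ
  ring_nf

variable (f : 𝓢(ℝ, ℂ))

lemma integrable_fourier : Integrable (𝓕 ⇑f) := by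
  rw [← SchwartzMap.fourier_coe]
  exact (𝓕 f).integrable

lemma fourier_deriv_schwartz : 𝓕 (deriv f) = fun ξ : ℝ => 2 * π * Complex.I * ξ * 𝓕 ⇑f ξ :=
  Real.fourier_deriv f.integrable f.differentiable (SchwartzMap.derivCLM ℂ ℂ f).integrable

lemma hasDerivWithinAt_cauchyExt (hz : 0 ≤ z.im) :
    HasDerivWithinAt (cauchyExt f) (cauchyExt (deriv f) z) {w : ℂ | 0 ≤ w.im} z := by
  have hξ : Integrable fun ξ : ℝ => 2 * π * Complex.I * ξ * 𝓕 ⇑f ξ := by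
    rw [← fourier_deriv_schwartz]
    exact integrable_fourier (SchwartzMap.derivCLM ℂ ℂ f)
  have h := (hasDerivWithinAt_fourierLaplace (integrable_fourier f).integrableOn
    hξ.integrableOn hz).const_mul (-(2 * π * Complex.I))
  rwa [← fourier_deriv_schwartz] at h

lemma continuousOn_cauchyExt : ContinuousOn (cauchyExt f) {z : ℂ | 0 ≤ z.im} :=
  fun _ hz => (hasDerivWithinAt_cauchyExt f hz).continuousWithinAt

lemma differentiableOn_cauchyExt : DifferentiableOn ℂ (cauchyExt f) {z : ℂ | 0 < z.im} :=
  fun z hz => (hasDerivWithinAt_cauchyExt f (z := z) hz.le).differentiableWithinAt.mono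
    fun w (hw : 0 < w.im) => hw.le

lemma exists_norm_cauchyExt_le : ∃ M, ∀ z : ℂ, 0 ≤ z.im → ‖cauchyExt f z‖ ≤ M :=
  ⟨_, fun _ hz => (norm_mul_le _ _).trans (mul_le_mul_of_nonneg_left
    (norm_fourierLaplace_le (integrable_fourier f).integrableOn hz) (norm_nonneg _))⟩

lemma tendsto_cauchyExt_cocompact :
    Tendsto (cauchyExt f) (cocompact ℂ ⊓ 𝓟 {z | 0 ≤ z.im}) (𝓝 0) := by
  have h := tendsto_fourierLaplace_cocompact (𝓕 f).integrable.integrableOn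
    (SchwartzMap.derivCLM ℂ ℂ (𝓕 f)).integrable.integrableOn (𝓕 f).hasDerivAt
  rw [← mul_zero (-(2 * π * Complex.I : ℂ))]
  exact h.const_mul _

lemma cauchyExt_smul_sub (c : ℂ) (f g : 𝓢(ℝ, ℂ)) (hz : 0 ≤ z.im) :
    cauchyExt (c • (f - g) : 𝓢(ℝ, ℂ)) z = c * (cauchyExt f z - cauchyExt g z) := by
  have hfourier : 𝓕 (c • (f - g)) = c • (𝓕 f - 𝓕 g) :=
    (map_smul (FourierTransform.fourierCLM ℂ 𝓢(ℝ, ℂ)) c (f - g)).trans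
      (congrArg (c • ·) (map_sub (FourierTransform.fourierCLM ℂ 𝓢(ℝ, ℂ)) f g))
  have hint := fun h : 𝓢(ℝ, ℂ) => integrableOn_exp_mul (integrable_fourier h).integrableOn hz
  have hlaplace : fourierLaplace (𝓕 ⇑(c • (f - g) : 𝓢(ℝ, ℂ))) z
      = c * (fourierLaplace (𝓕 ⇑f) z - fourierLaplace (𝓕 ⇑g) z) := by
    simp only [fourierLaplace]
    rw [← integral_sub (hint f) (hint g), ← integral_const_mul, ← SchwartzMap.fourier_coe, hfourier]
    congr with ξ
    rw [← SchwartzMap.fourier_coe, ← SchwartzMap.fourier_coe, smul_apply,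
      sub_apply, smul_eq_mul]
    ring
  rw [cauchyExt, cauchyExt, cauchyExt, hlaplace]
  ring

lemma cauchyExt_ofReal {u : ℝ → ℝ} (hu : ∀ k, f k = u k) (x : ℝ) :
    cauchyExt f x = π * hilbertR u x - π * u x * Complex.I := by
  obtain rfl : u = fun k => (f k).re := by ext k; simp [hu]
  have hint : Integrable fun k => (f k).re := f.integrable.re
  have hdiff : DifferentiableAt ℝ (fun k => (f k).re) x :=
    Complex.reCLM.differentiableAt.comp x f.differentiableAt
  have hline : Tendsto (fun ε : ℝ => (x + ε * Complex.I : ℂ)) (𝓝[>] 0)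
      (𝓝[{z | 0 ≤ z.im}] (x : ℂ)) := by
    refine tendsto_nhdsWithin_iff.2 ⟨?_, ?_⟩
    · have h : ContinuousAt (fun ε : ℝ => (x + ε * Complex.I : ℂ)) 0 := by fun_prop
      simpa using h.tendsto.mono_left nhdsWithin_le_nhds
    · filter_upwards [self_mem_nhdsWithin] with ε hε
      simpa using le_of_lt hε
  have hcont := (continuousOn_cauchyExt f x (by simp)).tendsto.comp hline
  refine tendsto_nhds_unique hcont ?_
  have hplemelj := tendsto_integral_div_add_mul_I_sub f.integrable (f.differentiableAt (x := x))
  rw [hilbertR_eq hint hdiff]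
  have hint_ofReal : ∫ s in Set.Ioi (0 : ℝ), s⁻¹ • (f (x - s) - f (x + s))
      = ((∫ s in Set.Ioi (0 : ℝ), s⁻¹ * ((f (x - s)).re - (f (x + s)).re) : ℝ) : ℂ) := by
    rw [← integral_complex_ofReal]
    congr with s
    rw [Complex.real_smul, hu (x - s), hu (x + s)]
    simp
  rw [hint_ofReal, hu x] at hplemelj
  convert hplemelj.congr' ?_ using 2
  · simp [pi_ne_zero]
  · filter_upwards [self_mem_nhdsWithin] with ε hε
    exact (cauchyExt_eq_integral_div f.integrable (by simpa using hε)).symm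

end CauchyExtension

section Avoidance

variable {X E : Type*} [TopologicalSpace X] {s : Set X}

lemma isCompact_inter_preimage_of_tendsto_cocompact [TopologicalSpace E] {F : X → E} {T : Set E}
    {y : E} (hs : IsClosed s) (hF : ContinuousOn F s)
    (hlim : Tendsto F (cocompact X ⊓ 𝓟 s) (𝓝 y)) (hT : IsClosed T) (hy : y ∉ T) :
    IsCompact (s ∩ F ⁻¹' T) := by
  have hev := hlim.eventually (hT.isOpen_compl.eventually_mem hy)
  rw [eventually_inf_principal] at hev
  obtain ⟨K, hK, hKT⟩ := mem_cocompact.1 hev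
  refine hK.of_isClosed_subset (hF.preimage_isClosed_of_isClosed hs hT) fun x hx => ?_
  by_contra hxK
  exact hKT hxK hx.1 hx.2

lemma exists_pos_forall_le_norm_sub [NormedAddCommGroup E] {F : X → E} {c : E}
    (hs : IsClosed s) (hF : ContinuousOn F s) (hlim : Tendsto F (cocompact X ⊓ 𝓟 s) (𝓝 0))
    (hc : c ≠ 0) (hne : ∀ x ∈ s, F x ≠ c) : ∃ κ > 0, ∀ x ∈ s, κ ≤ ‖c - F x‖ := by
  have hc' : 0 < ‖c‖ / 2 := by positivity
  have hK := isCompact_inter_preimage_of_tendsto_cocompact hs hF hlim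
    (T := Metric.closedBall c (‖c‖ / 2)) Metric.isClosed_closedBall (by simpa using hc)
  obtain ⟨κ, hκ, hκK⟩ := hK.exists_forall_le' (f := fun x => ‖c - F x‖)
    (continuousOn_const.sub (hF.mono Set.inter_subset_left)).norm (a := 0)
    fun x hx => norm_pos_iff.2 (sub_ne_zero.2 (hne x hx.1).symm)
  refine ⟨min κ (‖c‖ / 2), lt_min hκ hc', fun x hx => ?_⟩
  by_cases hxK : F x ∈ Metric.closedBall c (‖c‖ / 2)
  · exact (min_le_left _ _).trans (hκK x ⟨hx, hxK⟩)
  · rw [Metric.mem_closedBall, dist_comm, dist_eq_norm, not_le] at hxK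
    exact (min_le_right _ _).trans hxK.le

lemma eq_zero_of_forall_eq_of_tendsto_zero {F : ℂ → ℂ}
    (hlim : Tendsto F (cocompact ℂ ⊓ 𝓟 {z | 0 ≤ z.im}) (𝓝 0)) {w : ℂ}
    (hw : ∀ z : ℂ, 0 < z.im → F z = w) : w = 0 := by
  have hray : Tendsto (fun y : ℝ => y * Complex.I) atTop (cocompact ℂ ⊓ 𝓟 {z | 0 ≤ z.im}) := by
    refine tendsto_inf.2 ⟨?_, tendsto_principal.2 ?_⟩
    · rw [← Metric.cobounded_eq_cocompact, ← tendsto_norm_atTop_iff_cobounded]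
      simpa using tendsto_abs_atTop_atTop
    · filter_upwards [eventually_ge_atTop 0] with y hy
      simpa using hy
  refine tendsto_nhds_unique (tendsto_const_nhds.congr' ?_) (hlim.comp hray)
  filter_upwards [eventually_gt_atTop 0] with y hy
  exact (hw _ (by simpa using hy)).symm

lemma exists_pos_add_eq {F : ℂ → ℂ} (hd : DifferentiableOn ℂ F {z | 0 < z.im})
    (hlim : Tendsto F (cocompact ℂ ⊓ 𝓟 {z | 0 ≤ z.im}) (𝓝 0)) {z : ℂ} (hz : 0 < z.im)
    (hFz : F z ≠ 0) : ∃ δ : ℝ, 0 < δ ∧ ∃ w : ℂ, 0 < w.im ∧ F w = F z + δ := by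
  have hopen : IsOpen {z : ℂ | 0 < z.im} := isOpen_lt continuous_const Complex.continuous_im
  rcases (hd.analyticOnNhd hopen).is_constant_or_isOpen
    (convex_halfSpace_im_gt 0).isPreconnected with ⟨w, hw⟩ | himage
  · exact absurd ((hw z hz).trans (eq_zero_of_forall_eq_of_tendsto_zero hlim hw)) hFz
  · have hnhds := (himage _ subset_rfl hopen).mem_nhds ⟨z, hz, rfl⟩
    have hshift : Tendsto (fun δ : ℝ => F z + δ) (𝓝[>] 0) (𝓝 (F z)) := by
      have h : ContinuousAt (fun δ : ℝ => F z + δ) 0 := by fun_prop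
      simpa using h.tendsto.mono_left nhdsWithin_le_nhds
    obtain ⟨δ, ⟨w, hw, hFw⟩, hδ⟩ := ((hshift.eventually hnhds).and self_mem_nhdsWithin).exists
    exact ⟨δ, hδ, w, hw, hFw⟩

/-- If `c` were attained, the real part of `F` would have a maximum on the compact set
`F ⁻¹' [c, ∞)`; it lies in the open half-plane, where the open mapping theorem moves it up. -/
lemma ne_ofReal_of_boundary_re_lt {F : ℂ → ℂ} {c : ℝ}
    (hd : DifferentiableOn ℂ F {z | 0 < z.im}) (hF : ContinuousOn F {z | 0 ≤ z.im})
    (hlim : Tendsto F (cocompact ℂ ⊓ 𝓟 {z | 0 ≤ z.im}) (𝓝 0)) (hc : 0 < c)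
    (hbdry : ∀ x : ℝ, (F x).im = 0 → (F x).re < c) {z : ℂ} (hz : 0 ≤ z.im) : F z ≠ c := by
  intro hFz
  set T : Set ℂ := {w | c ≤ w.re ∧ w.im = 0}
  have hT : IsClosed T := (isClosed_le continuous_const Complex.continuous_re).inter
    (isClosed_eq Complex.continuous_im continuous_const)
  have hK := isCompact_inter_preimage_of_tendsto_cocompact
    (isClosed_le continuous_const Complex.continuous_im) hF hlim hT
    (fun h => hc.not_ge (by simpa using h.1))
  obtain ⟨z₀, ⟨hz₀, hre₀, him₀⟩, hmax⟩ := hK.exists_isMaxOn ⟨z, hz, by simp [T, hFz]⟩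
    (Complex.continuous_re.comp_continuousOn (hF.mono Set.inter_subset_left))
  have hz₀_pos : 0 < z₀.im := by
    refine lt_of_le_of_ne hz₀ fun h => ?_
    have hreal : z₀ = (z₀.re : ℂ) := Complex.ext rfl h.symm
    rw [hreal] at hre₀ him₀
    exact (hbdry _ him₀).not_ge hre₀
  obtain ⟨δ, hδ, z₁, hz₁, hFz₁⟩ := exists_pos_add_eq hd hlim hz₀_pos
    (fun h => hc.not_ge (by simpa [h] using hre₀))
  have hre₁ : (F z₁).re = (F z₀).re + δ := by simp [hFz₁]
  have him₁ : (F z₁).im = 0 := by simpa [hFz₁] using him₀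
  have hle : (F z₁).re ≤ (F z₀).re := hmax ⟨hz₁.le, by rw [hre₁]; linarith, him₁⟩
  linarith

end Avoidance

section DifferenceQuotient

/-- The average of `G` over the horizontal segment of length `X` centred at `z`. -/
def segmentAverage (G : ℂ → ℂ) (X : ℝ) (z : ℂ) : ℂ :=
  ∫ s in (-(1 / 2) : ℝ)..1 / 2, G (z + s * X)

/-- The centred difference quotient `D_X f` of a Schwartz function, as a Schwartz function. -/
def diffQuot (f : 𝓢(ℝ, ℂ)) (X : ℝ) : 𝓢(ℝ, ℂ) :=
  if X = 0 then SchwartzMap.derivCLM ℂ ℂ f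
  else (X : ℂ)⁻¹ •
    (SchwartzMap.compSubConstCLM ℂ (-(X / 2)) f - SchwartzMap.compSubConstCLM ℂ (X / 2) f)

variable {G : ℂ → ℂ} {z : ℂ} {X : ℝ}

lemma continuousOn_segmentAverage (hG : ContinuousOn G {z | 0 ≤ z.im}) {M : ℝ}
    (hM : ∀ z : ℂ, 0 ≤ z.im → ‖G z‖ ≤ M) :
    ContinuousOn (fun q : ℝ × ℂ => segmentAverage G q.1 q.2) {q | 0 ≤ q.2.im} := by
  have hcomp : ∀ s : ℝ,
      ContinuousOn (fun q : ℝ × ℂ => G (q.2 + s * q.1)) {q | 0 ≤ q.2.im} := fun s =>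
    hG.comp (by fun_prop) fun q hq => by simpa using hq
  have hmeas : ∀ q : ℝ × ℂ, 0 ≤ q.2.im → Continuous fun s : ℝ => G (q.2 + s * q.1) :=
    fun q hq => hG.comp_continuous (by fun_prop) fun s => by simpa using hq
  intro q hq
  refine intervalIntegral.continuousWithinAt_of_dominated_interval (bound := fun _ => M) ?_ ?_
    intervalIntegrable_const (Eventually.of_forall fun s _ => hcomp s q hq)
  · filter_upwards [self_mem_nhdsWithin] with q' hq' using (hmeas q' hq').aestronglyMeasurable
  · filter_upwards [self_mem_nhdsWithin] with q' hq'
    exact Eventually.of_forall fun s _ => hM _ (by simpa using hq')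

lemma norm_segmentAverage_le {R A ε : ℝ} (hG : ∀ w : ℂ, 0 ≤ w.im → R ≤ ‖w‖ → ‖G w‖ ≤ ε)
    (hX : |X| ≤ A) (hz : 0 ≤ z.im) (hzR : R + A ≤ ‖z‖) : ‖segmentAverage G X z‖ ≤ ε := by
  have h := intervalIntegral.norm_integral_le_of_norm_le_const (C := ε)
    (f := fun s : ℝ => G (z + s * X)) (a := -(1 / 2)) (b := 1 / 2) fun s hs => ?_
  · norm_num at h
    exact h
  · rw [Set.uIoc_of_le (by norm_num)] at hs
    have hs' : ‖(s * X : ℂ)‖ ≤ A := by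
      rw [norm_mul, Complex.norm_real, Complex.norm_real, Real.norm_eq_abs, Real.norm_eq_abs]
      have : |s| ≤ 1 := abs_le.2 ⟨by linarith [hs.1], by linarith [hs.2]⟩
      exact (mul_le_of_le_one_left (abs_nonneg X) this).trans hX
    refine hG _ (by simpa using hz) ?_
    linarith [norm_sub_le_norm_add z (s * X)]

lemma segmentAverage_eq_div {G' : ℂ → ℂ} (hG' : ContinuousOn G' {z | 0 ≤ z.im})
    (hd : ∀ z : ℂ, 0 ≤ z.im → HasDerivWithinAt G (G' z) {w | 0 ≤ w.im} z) (hX : X ≠ 0)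
    (hz : 0 ≤ z.im) : segmentAverage G' X z = (G (z + X / 2) - G (z - X / 2)) / X := by
  have hline : ∀ s : ℝ, z + s * X ∈ {w : ℂ | 0 ≤ w.im} := fun s => by simpa using hz
  have hderiv : ∀ s : ℝ, HasDerivAt (fun s : ℝ => G (z + s * X) / X) (G' (z + s * X)) s :=
    fun s => by
    have hinner : HasDerivAt (fun s : ℝ => z + s * X) (X : ℂ) s := by
      simpa using ((hasDerivAt_id' s).ofReal_comp.mul_const (X : ℂ)).const_add z
    have h := ((hd _ (hline s)).scomp_hasDerivAt s hinner hline).div_const (X : ℂ)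
    simpa [hX] using h
  rw [segmentAverage, intervalIntegral.integral_eq_sub_of_hasDerivAt (fun s _ => hderiv s)
    ((hG'.comp_continuous (by fun_prop) hline).intervalIntegrable _ _), ← sub_div]
  congr 3
  · push_cast; ring_nf
  · push_cast; ring_nf

variable (f : 𝓢(ℝ, ℂ))

lemma cauchyExt_diffQuot_of_ne (hX : X ≠ 0) (hz : 0 ≤ z.im) :
    cauchyExt (diffQuot f X) z = (cauchyExt f (z + X / 2) - cauchyExt f (z - X / 2)) / X := by
  have hright : ⇑(SchwartzMap.compSubConstCLM ℂ (-(X / 2)) f) = fun k => f (k + (X / 2 : ℝ)) := by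
    ext k
    rw [SchwartzMap.compSubConstCLM_apply, sub_neg_eq_add]
  have hleft : ⇑(SchwartzMap.compSubConstCLM ℂ (X / 2) f) = fun k => f (k + (-(X / 2) : ℝ)) := by
    ext k
    rw [SchwartzMap.compSubConstCLM_apply, sub_eq_add_neg]
  rw [diffQuot, if_neg hX, cauchyExt_smul_sub _ _ _ hz, hright, hleft, cauchyExt_comp_add_right,
    cauchyExt_comp_add_right]
  push_cast
  rw [← sub_eq_add_neg, div_eq_inv_mul _ (X : ℂ)]

lemma cauchyExt_diffQuot (X : ℝ) (hz : 0 ≤ z.im) :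
    cauchyExt (diffQuot f X) z = segmentAverage (cauchyExt (deriv f)) X z := by
  rcases eq_or_ne X 0 with rfl | hX
  · have hderiv : ⇑(SchwartzMap.derivCLM ℂ ℂ f) = deriv f := rfl
    simp only [diffQuot, segmentAverage, if_true, hderiv, Complex.ofReal_zero, mul_zero, add_zero,
      intervalIntegral.integral_const]
    norm_num
  · rw [cauchyExt_diffQuot_of_ne f hX hz]
    exact (segmentAverage_eq_div (continuousOn_cauchyExt (SchwartzMap.derivCLM ℂ ℂ f))
      (fun w hw => hasDerivWithinAt_cauchyExt f hw) hX hz).symm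

lemma continuousOn_cauchyExt_diffQuot :
    ContinuousOn (fun q : ℝ × ℂ => cauchyExt (diffQuot f q.1) q.2) {q | 0 ≤ q.2.im} := by
  obtain ⟨M, hM⟩ := exists_norm_cauchyExt_le (SchwartzMap.derivCLM ℂ ℂ f)
  exact (continuousOn_segmentAverage
    (continuousOn_cauchyExt (SchwartzMap.derivCLM ℂ ℂ f)) hM).congr
    fun q hq => cauchyExt_diffQuot f q.1 hq

lemma norm_cauchyExt_diffQuot_le {M : ℝ} (hM : ∀ z : ℂ, 0 ≤ z.im → ‖cauchyExt f z‖ ≤ M)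
    (hX : X ≠ 0) (hz : 0 ≤ z.im) : ‖cauchyExt (diffQuot f X) z‖ ≤ 2 * M / |X| := by
  rw [cauchyExt_diffQuot_of_ne f hX hz, norm_div, Complex.norm_real, Real.norm_eq_abs]
  gcongr
  refine (norm_sub_le _ _).trans ?_
  linarith [hM (z + X / 2) (by simpa using hz), hM (z - X / 2) (by simpa using hz)]

lemma tendsto_cauchyExt_diffQuot_cocompact :
    Tendsto (fun q : ℝ × ℂ => cauchyExt (diffQuot f q.1) q.2)
      (cocompact (ℝ × ℂ) ⊓ 𝓟 {q | 0 ≤ q.2.im}) (𝓝 0) := by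
  obtain ⟨M, hM⟩ := exists_norm_cauchyExt_le f
  have hM0 : 0 ≤ M := (norm_nonneg _).trans (hM 0 le_rfl)
  refine Metric.nhds_basis_closedBall.tendsto_right_iff.2 fun ε hε => ?_
  have hdecay : ∀ᶠ w in cocompact ℂ ⊓ 𝓟 {z | 0 ≤ z.im},
      cauchyExt (deriv f) w ∈ Metric.closedBall 0 ε :=
    (tendsto_cauchyExt_cocompact (SchwartzMap.derivCLM ℂ ℂ f)).eventually
      (Metric.closedBall_mem_nhds 0 hε)
  rw [eventually_inf_principal, ← Metric.cobounded_eq_cocompact] at hdecay ⊢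
  obtain ⟨R, -, hR⟩ := hasBasis_cobounded_norm.eventually_iff.1 hdecay
  set A := 2 * M / ε with hA
  refine hasBasis_cobounded_norm.eventually_iff.2 ⟨|R| + A + 1, trivial, fun q hq hz => ?_⟩
  rw [mem_closedBall_zero_iff]
  rcases le_or_gt |q.1| A with hX | hX
  · rw [cauchyExt_diffQuot f q.1 hz]
    refine norm_segmentAverage_le (fun w hw hRw => by simpa using hR (x := w) hRw hw) hX hz ?_
    have hmax : |R| + A + 1 ≤ max ‖q.1‖ ‖q.2‖ := hq
    rcases le_max_iff.1 hmax with h | h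
    · rw [Real.norm_eq_abs] at h
      linarith [abs_nonneg R]
    · linarith [le_abs_self R]
  · have hX0 : 0 < |q.1| := lt_of_le_of_lt (by positivity) hX
    refine (norm_cauchyExt_diffQuot_le f hM (abs_pos.1 hX0) hz).trans ?_
    rw [hA, div_lt_iff₀ hε] at hX
    rw [div_le_iff₀ hX0]
    linarith

end DifferenceQuotient

section Stability

lemma exists_eq_zero_of_integral_eq_zero {u : ℝ → ℝ} (hcont : Continuous u) (hint : Integrable u)
    (hu : ∫ t, u t = 0) : ∃ t, u t = 0 := by
  have hpos : ∀ v : ℝ → ℝ, Continuous v → Integrable v → ∫ t, v t = 0 → ∃ t, v t ≤ 0 := by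
    intro v hv hvi hv0
    by_contra! h
    exact (integral_pos_of_integrable_nonneg_nonzero hv hvi (fun t => (h t).le) (h 0).ne').ne' hv0
  have hneg := hpos (fun t => -u t) hcont.neg hint.neg (by rw [integral_neg, hu, neg_zero])
  simp only [neg_nonpos] at hneg
  exact mem_range_of_exists_le_of_exists_ge hcont (hpos u hcont hint hu) hneg

lemma exists_DXP_eq_zero {P : ℝ → ℝ} (hcont : Continuous P) (hint : Integrable P) {X : ℝ}
    (hX : X ≠ 0) : ∃ t, DXP P X t = 0 := by
  simp only [DXP, if_neg hX]
  have hright := hint.comp_add_right (X / 2)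
  have hleft := hint.comp_sub_right (X / 2)
  refine exists_eq_zero_of_integral_eq_zero (by fun_prop) ((hright.sub hleft).div_const X) ?_
  rw [integral_div, integral_sub hright hleft, integral_add_right_eq_self P,
    integral_sub_right_eq_self P, sub_self, zero_div]

lemma integral_ofReal_div_sub_conj (u : ℝ → ℝ) (z : ℂ) :
    ∫ k : ℝ, (u k : ℂ) / (starRingEnd ℂ z - k) = starRingEnd ℂ (∫ k : ℝ, (u k : ℂ) / (z - k)) := by
  rw [← integral_conj]
  simp

lemma one_sub_htilde {p q X : ℝ} (hp : p ≠ 0) (hq : q ≠ 0) (hX : X ≠ 0) (P : ℝ → ℝ) (ω : ℂ) :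
    1 - htilde p q P X ω
      = ((π * (4 * π * p / q) : ℝ) -
          ∫ k : ℝ, (DXP P X k : ℂ) / (-Complex.I * ω / (4 * π ^ 2 * p * X : ℝ) - k))
        / (π * (4 * π * p / q) : ℝ) := by
  have hp' : (p : ℂ) ≠ 0 := by exact_mod_cast hp
  have hq' : (q : ℂ) ≠ 0 := by exact_mod_cast hq
  have hX' : (X : ℂ) ≠ 0 := by exact_mod_cast hX
  have hπ : (π : ℂ) ≠ 0 := by exact_mod_cast pi_ne_zero
  have hlevel : ((π * (4 * π * p / q) : ℝ) : ℂ) ≠ 0 := by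
    exact_mod_cast (by positivity : π * (4 * π * p / q) ≠ 0)
  rw [sub_div, div_self hlevel, htilde, ← integral_const_mul, ← integral_div]
  congr with k
  have hden : (ω - 4 * (π : ℂ) ^ 2 * Complex.I * p * k * X) =
      4 * π ^ 2 * p * X * Complex.I * (-Complex.I * ω / (4 * π ^ 2 * p * X : ℝ) - k) := by
    push_cast
    field_simp
    linear_combination ω * Complex.I_sq
  rw [hden, DXP, if_neg hX]
  generalize -Complex.I * ω / (4 * π ^ 2 * p * X : ℝ) - k = w
  push_cast
  rcases eq_or_ne w 0 with rfl | hw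
  · simp
  · field_simp

variable (P : 𝓢(ℝ, ℝ)) {l : ℝ}

/-- A real Schwartz function, regarded as complex-valued. -/
def complexify : 𝓢(ℝ, ℂ) :=
  SchwartzMap.postcompCLM Complex.ofRealCLM P

lemma diffQuot_complexify (X k : ℝ) : diffQuot (complexify P) X k = DXP P X k := by
  have hcoe : ⇑(complexify P) = fun k => (P k : ℂ) := rfl
  rcases eq_or_ne X 0 with rfl | hX
  · rw [diffQuot, DXP, if_pos rfl, if_pos rfl, SchwartzMap.derivCLM_apply, hcoe]
    exact (P.differentiableAt.hasDerivAt.ofReal_comp).deriv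
  · rw [diffQuot, DXP, if_neg hX, if_neg hX, smul_apply, sub_apply,
      SchwartzMap.compSubConstCLM_apply, SchwartzMap.compSubConstCLM_apply, hcoe, sub_neg_eq_add,
      smul_eq_mul, ← div_eq_inv_mul]
    push_cast
    rfl

lemma cauchyExt_diffQuot_complexify (X x : ℝ) :
    cauchyExt (diffQuot (complexify P) X) x
      = π * hilbertR (DXP P X) x - π * DXP P X x * Complex.I :=
  cauchyExt_ofReal _ (diffQuot_complexify P X) x

/-- For `X ≠ 0` the function `D_X P` has integral zero, hence a zero; the Hilbert transform there
is `O(1/X)`. -/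
lemma nonneg_of_forall_hilbertR_lt
    (hyp : ∀ X t : ℝ, DXP P X t = 0 → hilbertR (DXP P X) t < l) : 0 ≤ l := by
  obtain ⟨M, hM⟩ := exists_norm_cauchyExt_le (complexify P)
  have hbound : ∀ᶠ X : ℝ in atTop, -(2 * M / X) ≤ π * l := by
    filter_upwards [eventually_gt_atTop 0] with X hX
    obtain ⟨t, ht⟩ := exists_DXP_eq_zero P.continuous P.integrable hX.ne'
    have hnorm := norm_cauchyExt_diffQuot_le (complexify P) hM hX.ne' (z := t) (by simp)
    rw [cauchyExt_diffQuot_complexify, ht, abs_of_pos hX] at hnorm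
    have hre : |π * hilbertR (DXP P X) t| ≤ 2 * M / X := by
      simpa [abs_mul] using hnorm
    have hlt := mul_lt_mul_of_pos_left (hyp X t ht) pi_pos
    linarith [neg_le_of_abs_le hre]
  have hlim : Tendsto (fun X : ℝ => -(2 * M / X)) atTop (𝓝 0) := by
    simpa using (tendsto_id.const_div_atTop (2 * M)).neg
  exact nonneg_of_mul_nonneg_right (le_of_tendsto hlim hbound) pi_pos

lemma exists_pos_forall_le_norm_sub_cauchyExt_diffQuot (hl : 0 < l)
    (hyp : ∀ X t : ℝ, DXP P X t = 0 → hilbertR (DXP P X) t < l) :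
    ∃ κ > 0, ∀ (X : ℝ) (z : ℂ), 0 ≤ z.im →
      κ ≤ ‖((π * l : ℝ) : ℂ) - cauchyExt (diffQuot (complexify P) X) z‖ := by
  have hlevel : 0 < π * l := by positivity
  have hne : ∀ q : ℝ × ℂ, 0 ≤ q.2.im →
      cauchyExt (diffQuot (complexify P) q.1) q.2 ≠ (π * l : ℝ) := fun q hq => by
    refine ne_ofReal_of_boundary_re_lt (differentiableOn_cauchyExt _) (continuousOn_cauchyExt _)
      (tendsto_cauchyExt_cocompact _) hlevel (fun x hx => ?_) hq
    rw [cauchyExt_diffQuot_complexify] at hx ⊢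
    have hzero : DXP P q.1 x = 0 := by simpa [pi_ne_zero] using hx
    simpa [hzero] using mul_lt_mul_of_pos_left (hyp q.1 x hzero) pi_pos
  obtain ⟨κ, hκ, hle⟩ := exists_pos_forall_le_norm_sub
    (isClosed_le continuous_const (Complex.continuous_im.comp continuous_snd))
    (continuousOn_cauchyExt_diffQuot (complexify P))
    (tendsto_cauchyExt_diffQuot_cocompact (complexify P)) (by exact_mod_cast hlevel.ne') hne
  exact ⟨κ, hκ, fun X z hz => hle (X, z) hz⟩

lemma exists_pos_forall_le_norm_sub_integral_DXP_div (hl : 0 < l)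
    (hyp : ∀ X t : ℝ, DXP P X t = 0 → hilbertR (DXP P X) t < l) :
    ∃ κ > 0, ∀ (X : ℝ) (z : ℂ), z.im ≠ 0 →
      κ ≤ ‖((π * l : ℝ) : ℂ) - ∫ k : ℝ, (DXP P X k : ℂ) / (z - k)‖ := by
  obtain ⟨κ, hκ, hle⟩ := exists_pos_forall_le_norm_sub_cauchyExt_diffQuot P hl hyp
  have hupper : ∀ (X : ℝ) (z : ℂ), 0 < z.im →
      κ ≤ ‖((π * l : ℝ) : ℂ) - ∫ k : ℝ, (DXP P X k : ℂ) / (z - k)‖ := fun X z hz => by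
    simpa only [cauchyExt_eq_integral_div (diffQuot (complexify P) X).integrable hz,
      diffQuot_complexify] using hle X z hz.le
  refine ⟨κ, hκ, fun X z hz => ?_⟩
  rcases hz.lt_or_gt with hz | hz
  · have h := hupper X (starRingEnd ℂ z) (by simpa using hz)
    rwa [integral_ofReal_div_sub_conj, ← Complex.conj_ofReal, ← map_sub, Complex.norm_conj] at h
  · exact hupper X z hz

end Stability

theorem stmt_18_general (p q : ℝ) (hp : p ≠ 0) (hq : q ≠ 0) (P : SchwartzMap ℝ ℝ)
    (hyp : ∀ X ts : ℝ, DXP (⇑P) X ts = 0 → hilbertR (DXP (⇑P) X) ts < 4 * π * p / q) :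
    ∃ κ > 0, ∀ (X : ℝ) (ω : ℂ), 0 < ω.re → κ ≤ ‖1 - htilde p q (⇑P) X ω‖ := by
  have hl : 0 < 4 * π * p / q :=
    lt_of_le_of_ne (nonneg_of_forall_hilbertR_lt P hyp) (by positivity : 4 * π * p / q ≠ 0).symm
  obtain ⟨κ, hκ, hle⟩ := exists_pos_forall_le_norm_sub_integral_DXP_div P hl hyp
  set c := π * (4 * π * p / q) with hc
  have hc0 : 0 < c := by positivity
  refine ⟨min 1 (κ / c), lt_min one_pos (by positivity), fun X ω hω => ?_⟩
  rcases eq_or_ne X 0 with rfl | hX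
  · simp [htilde]
  · have him : (-Complex.I * ω / (4 * π ^ 2 * p * X : ℝ)).im ≠ 0 := by
      rw [Complex.div_ofReal_im]
      exact div_ne_zero (by simpa using hω.ne') (by positivity)
    refine (min_le_right _ _).trans ?_
    rw [one_sub_htilde hp hq hX, norm_div, ← hc, Complex.norm_real, Real.norm_eq_abs,
      abs_of_pos hc0]
    gcongr
    exact hle X _ him

/-- Sufficient condition for stability: if for every `X` and every real
zero `t*` of `D_X P` one has `H[D_X P](t*) < 4πp/q`, then `P` is stable, i.e. there is `κ > 0`
with `|1 − h̃(X,ω)| ≥ κ` for all `X ∈ ℝ` and all `ω` with `Re ω > 0`. -/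
theorem stmt_18 (p q : ℝ) (hp : p ≠ 0) (hq : q ≠ 0)
    (P : SchwartzMap ℝ ℝ) (hPc : HasCompactSupport ⇑P)
    (hyp : ∀ X ts : ℝ, DXP (⇑P) X ts = 0 → hilbertR (DXP (⇑P) X) ts < 4 * π * p / q) :
    ∃ κ > 0, ∀ (X : ℝ) (ω : ℂ), 0 < ω.re → κ ≤ ‖1 - htilde p q (⇑P) X ω‖ :=
  stmt_18_general p q hp hq P hyp

end
end
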